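/- arXiv:1909.06409 — 8 statements merged into one kernel-verified Lean document; each statement's English description precedes it below -/
import Mathlib

section
/- Let q be a prime power, let n ≥ 1, and let f(x) = Σ_{i=0}^{n−1} a_i x^{q^i} ∈ F_{q^n}[x] be a q-polynomial. For 0 ≤ μ ≤ n−1, the F_q-dimension of the kernel of the F_q-linear transformation of F_{q^n} induced by f equals μ if and only if det(D_0(f)) = det(D_1(f)) = … = det(D_{μ−1}(f)) = 0 and det(D_μ(f)) ≠ 0. -/
/-!
Write `f` and `g` for the maps `x ↦ ∑ a_i x^{q^i}` and `x ↦ ∑ c_i x^{q^i}`, and let `k` be the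
dimension of `ker f` over the field `K` with `q` elements. Modulo `x^{q^n} - x`, the composite
`g ∘ f` is again a `q`-polynomial, with `j`-th coefficient `∑_i c_i a_{(j-i) mod n}^{q^i}`
(`qmap_comp`). Hence a vector in the left kernel of `D_m(f)` is the same thing as a `g` of
`q`-degree `< n - m` for which `g ∘ f` has `q`-degree `< m` (`dickSub_det_eq_zero_iff`).

* If `m < k`, then the image of `f` has dimension `n - k < n - m`, so by counting unknowns some
  nonzero `g` of `q`-degree `< n - m` kills the image; then `g ∘ f = 0` and `det D_m(f) = 0`.
* If `m = k` and `g ∘ f` has `q`-degree `< k`, then it vanishes on the `q^k` elements of `ker f`,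
  so it is zero; thus `g`, of `q`-degree `< n - k`, vanishes on the `q^{n-k}` elements of the image
  of `f`, so `g = 0`. Therefore `det D_k(f) ≠ 0`.

So `k` is the first index `m` with `det D_m(f) ≠ 0`. If `k = n`, the first point shows that all
determinants with index at most `n - 1` vanish.
-/

/-- The `(n-m) × (n-m)` matrix obtained from the Dickson (σ-Dickson) matrix of the
`q`-polynomial with coefficients `a 0, …, a (n-1)` by removing its first `m` columns and
last `m` rows; entry `(i,j)` is `a_((j+m-i) mod n) ^ (q ^ i)`. -/
noncomputable def dickSub (q n m : ℕ) {F : Type*} [Field F] (a : ℕ → F) :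
    Matrix (Fin (n - m)) (Fin (n - m)) F :=
  Matrix.of fun i j => a ((j.val + m + n - i.val) % n) ^ q ^ i.val

section Dickson

variable (K : Type*) [Field K] [Fintype K] {F : Type*} [Field F] [Algebra K F]

/-- The `K`-linear map `x ↦ ∑_{i < d} c_i x^{q^i}`, where `q` is the cardinality of `K`. Only the
first `d` values of `c` matter. -/
noncomputable def qmap (d : ℕ) (c : ℕ → F) : F →ₗ[K] F :=
  ∑ i ∈ Finset.range d, c i • ((FiniteField.frobeniusAlgHom K F) ^ i).toLinearMap

lemma frob_pow_apply (i : ℕ) (x : F) :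
    ((FiniteField.frobeniusAlgHom K F) ^ i) x = x ^ Fintype.card K ^ i := by
  rw [AlgHom.coe_pow, FiniteField.coe_frobeniusAlgHom, pow_iterate]

lemma qmap_apply (d : ℕ) (c : ℕ → F) (x : F) :
    qmap K d c x = ∑ i ∈ Finset.range d, c i * x ^ Fintype.card K ^ i := by
  simp [qmap, LinearMap.sum_apply, frob_pow_apply]

/-- A `q`-polynomial of `q`-degree `< d` with at least `q^d` zeros is zero: its degree is at most
`q^{d-1}`. -/
lemma coeff_eq_zero_of_qmap [Finite F] (d : ℕ) (c : ℕ → F) (S : Submodule K F)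
    (hS : Fintype.card K ^ d ≤ Nat.card S) (h : ∀ x ∈ S, qmap K d c x = 0) :
    ∀ i < d, c i = 0 := by
  classical
  have := Fintype.ofFinite F
  have hq : 1 < Fintype.card K := Fintype.one_lt_card
  intro i hi
  let P : Polynomial F :=
    ∑ i ∈ Finset.range d, Polynomial.C (c i) * Polynomial.X ^ Fintype.card K ^ i
  have hP : P = 0 := by
    apply Polynomial.eq_zero_of_natDegree_lt_card_of_eval_eq_zero' P (S : Set F).toFinset
    · intro x hx
      have := h x (by simpa using hx)
      rw [qmap_apply] at this
      simpa [P, Polynomial.eval_finsetSum] using this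
    · have h1 : P.natDegree ≤ Fintype.card K ^ (d - 1) := by
        apply Polynomial.natDegree_sum_le_of_forall_le
        intro j hj
        refine (Polynomial.natDegree_C_mul_X_pow_le _ _).trans ?_
        exact Nat.pow_le_pow_right hq.le (by have := Finset.mem_range.1 hj; omega)
      have h2 : Fintype.card K ^ (d - 1) < Fintype.card K ^ d :=
        Nat.pow_lt_pow_right hq (by omega)
      have h3 : (S : Set F).toFinset.card = Nat.card S := by
        rw [Set.toFinset_card, ← Nat.card_eq_fintype_card]; rfl
      omega
  have h4 : P.coeff (Fintype.card K ^ i) = c i := by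
    simp only [P, Polynomial.finsetSum_coeff, Polynomial.coeff_C_mul_X_pow]
    rw [Finset.sum_eq_single i]
    · simp
    · intro j _ hj
      rw [if_neg]
      exact fun h => hj (Nat.pow_right_injective hq h).symm
    · intro h
      exact absurd (Finset.mem_range.2 hi) h
  rw [← h4, hP, Polynomial.coeff_zero]

/-- Composition of `q`-polynomials modulo `x^{q^n} - x`. -/
lemma qmap_comp [Finite F] (n : ℕ) (hF : Nat.card F = Fintype.card K ^ n) (d : ℕ) (hd : d ≤ n)
    (a c : ℕ → F) (x : F) :
    qmap K d c (qmap K n a x) = qmap K n (fun j => ∑ i ∈ Finset.range d,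
      c i * a ((j + n - i) % n) ^ Fintype.card K ^ i) x := by
  have := Fintype.ofFinite F
  have hx : x ^ Fintype.card K ^ n = x := by
    rw [← hF, Nat.card_eq_fintype_card, FiniteField.pow_card]
  rw [qmap_apply K d, qmap_apply K n (fun j => ∑ i ∈ Finset.range d, _)]
  simp only [Finset.sum_mul]
  rw [Finset.sum_comm]
  refine Finset.sum_congr rfl fun i hi => ?_
  have hi : i < n := (Finset.mem_range.1 hi).trans_le hd
  rw [← frob_pow_apply, qmap_apply, map_sum, Finset.mul_sum]
  simp_rw [mul_assoc, map_mul, frob_pow_apply, ← pow_mul, ← pow_add]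
  -- the shift `l ↦ l + i` modulo `n` matches the terms of both sides
  refine Finset.sum_nbij' (fun l => (l + i) % n) (fun j => (j + n - i) % n) ?_ ?_ ?_ ?_ ?_
  · intro l _; exact Finset.mem_range.2 (Nat.mod_lt _ (by omega))
  · intro l _; exact Finset.mem_range.2 (Nat.mod_lt _ (by omega))
  · intro l hl
    have hl := Finset.mem_range.1 hl
    rcases lt_or_ge (l + i) n with h | h
    · rw [Nat.mod_eq_of_lt h, show l + i + n - i = l + n by omega, Nat.add_mod_right,
        Nat.mod_eq_of_lt hl]
    · rw [Nat.mod_eq_sub_mod h, Nat.mod_eq_of_lt (show l + i - n < n by omega),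
        show l + i - n + n - i = l by omega, Nat.mod_eq_of_lt hl]
  · intro j hj
    have hj := Finset.mem_range.1 hj
    rcases lt_or_ge j i with h | h
    · rw [Nat.mod_eq_of_lt (show j + n - i < n by omega), show j + n - i + i = j + n by omega,
        Nat.add_mod_right, Nat.mod_eq_of_lt hj]
    · rw [show j + n - i = j - i + n by omega, Nat.add_mod_right,
        Nat.mod_eq_of_lt (show j - i < n by omega), show j - i + i = j by omega,
        Nat.mod_eq_of_lt hj]
  · intro l hl
    have hl := Finset.mem_range.1 hl
    rcases lt_or_ge (l + i) n with h | h
    · rw [Nat.mod_eq_of_lt h, show l + i + n - i = l + n by omega, Nat.add_mod_right,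
        Nat.mod_eq_of_lt hl]
    · rw [Nat.mod_eq_sub_mod h, Nat.mod_eq_of_lt (show l + i - n < n by omega),
        show l + i - n + n - i = l by omega, Nat.mod_eq_of_lt hl]
      congr 2
      conv_lhs => rw [show l + i = n + (l + i - n) by omega, pow_add, pow_mul, hx]

/-- Singularity of `D_m` in terms of `q`-polynomials: the vector `c` is in the left kernel of `D_m`
exactly when the composite described in `qmap_comp`, for `d = n - m`, has `q`-degree `< m`. -/
lemma dickSub_det_eq_zero_iff (q n m : ℕ) (a : ℕ → F) :
    (dickSub q n m a).det = 0 ↔ ∃ c : ℕ → F, (∃ i < n - m, c i ≠ 0) ∧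
      ∀ j, m ≤ j → j < n →
        ∑ i ∈ Finset.range (n - m), c i * a ((j + n - i) % n) ^ q ^ i = 0 := by
  rw [← Matrix.exists_vecMul_eq_zero_iff]
  constructor
  · rintro ⟨v, hv, h⟩
    obtain ⟨i, hi⟩ := Function.ne_iff.1 hv
    refine ⟨fun i => if h : i < n - m then v ⟨i, h⟩ else 0, ⟨i, i.2, by simpa using hi⟩, ?_⟩
    intro j hmj hjn
    have := congrFun h ⟨j - m, by omega⟩
    rw [Finset.sum_range]
    simpa [Matrix.vecMul, dotProduct, dickSub, Nat.sub_add_cancel hmj] using this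
  · rintro ⟨c, ⟨i, hi, hci⟩, h⟩
    refine ⟨fun i => c i, fun h0 => hci (congrFun h0 ⟨i, hi⟩), ?_⟩
    ext j
    have := h (j + m) (by omega) (by omega)
    rw [Finset.sum_range] at this
    simpa [Matrix.vecMul, dotProduct, dickSub] using this

/-- A subspace of dimension less than `d` is killed by a nonzero `q`-polynomial of
`q`-degree `< d`. -/
lemma exists_qmap_vanishing [Finite F] (d : ℕ) (S : Submodule K F)
    (hS : Module.finrank K S < d) :
    ∃ c : ℕ → F, (∃ i < d, c i ≠ 0) ∧ ∀ x ∈ S, qmap K d c x = 0 := by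
  let b := Module.finBasis K S
  let M : Matrix (Fin (Module.finrank K S)) (Fin d) F :=
    Matrix.of fun s i => (b s : F) ^ Fintype.card K ^ (i : ℕ)
  have hker : LinearMap.ker M.mulVecLin ≠ ⊥ :=
    LinearMap.ker_ne_bot_of_finrank_lt (by simpa using hS)
  obtain ⟨v, hv, hv0⟩ := (Submodule.ne_bot_iff _).1 hker
  obtain ⟨i, hi⟩ := Function.ne_iff.1 hv0
  refine ⟨fun i => if h : i < d then v ⟨i, h⟩ else 0, ⟨i, i.2, by simpa using hi⟩, ?_⟩
  have h0 : (qmap K d (fun i => if h : i < d then v ⟨i, h⟩ else 0)) ∘ₗ S.subtype = 0 := by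
    refine b.ext fun s => ?_
    have := congrFun (LinearMap.mem_ker.1 hv) s
    simp only [LinearMap.comp_apply, Submodule.subtype_apply, qmap_apply, LinearMap.zero_apply]
    rw [Finset.sum_range]
    simpa [M, Matrix.mulVec, dotProduct, mul_comm] using this
  intro x hx
  simpa using LinearMap.congr_fun h0 ⟨x, hx⟩

lemma dickSub_det_eq_zero_of_lt [Finite F] (n : ℕ) (hF : Nat.card F = Fintype.card K ^ n)
    (hfr : Module.finrank K F = n) (a : ℕ → F) (m : ℕ)
    (hm : m < Module.finrank K (LinearMap.ker (qmap K n a))) :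
    (dickSub (Fintype.card K) n m a).det = 0 := by
  have hrn := (qmap K n a).finrank_range_add_finrank_ker
  obtain ⟨c, hc, h⟩ := exists_qmap_vanishing K (n - m) (LinearMap.range (qmap K n a)) (by omega)
  refine (dickSub_det_eq_zero_iff _ n m a).2 ⟨c, hc, fun j _ hj => ?_⟩
  refine coeff_eq_zero_of_qmap K n (fun j => ∑ i ∈ Finset.range (n - m),
      c i * a ((j + n - i) % n) ^ Fintype.card K ^ i) ⊤ ?_ ?_ j hj
  · rw [← hF]; exact (Nat.card_congr (Equiv.Set.univ F).symm).le
  · intro x _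
    rw [← qmap_comp K n hF (n - m) (by omega) a c x]
    exact h _ ⟨x, rfl⟩

lemma dickSub_det_ne_zero [Finite F] (n : ℕ) (hF : Nat.card F = Fintype.card K ^ n)
    (hfr : Module.finrank K F = n) (a : ℕ → F) (m : ℕ)
    (hm : Module.finrank K (LinearMap.ker (qmap K n a)) = m) :
    (dickSub (Fintype.card K) n m a).det ≠ 0 := by
  have hrn := (qmap K n a).finrank_range_add_finrank_ker
  intro hdet
  obtain ⟨c, ⟨i, hi, hci⟩, h⟩ := (dickSub_det_eq_zero_iff _ n m a).1 hdet
  have hcard (S : Submodule K F) : Nat.card S = Fintype.card K ^ Module.finrank K S := by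
    rw [Module.natCard_eq_pow_finrank (K := K), Nat.card_eq_fintype_card]
  set b : ℕ → F := fun j => ∑ i ∈ Finset.range (n - m),
      c i * a ((j + n - i) % n) ^ Fintype.card K ^ i with hb
  have hcomp (x : F) : qmap K (n - m) c (qmap K n a x) = qmap K n b x :=
    qmap_comp K n hF (n - m) (by omega) a c x
  -- the coefficients `b j` with `m ≤ j` vanish by the choice of `c`
  have htrunc (x : F) : qmap K n b x = qmap K m b x := by
    rw [qmap_apply, qmap_apply]
    symm
    apply Finset.sum_subset (Finset.range_subset_range.2 (by omega))
    intro j hj hj'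
    rw [Finset.mem_range] at hj hj'
    rw [hb]
    simp only
    rw [h j (by omega) hj, zero_mul]
  have hb0 : ∀ j < m, b j = 0 := by
    refine coeff_eq_zero_of_qmap K m b (LinearMap.ker (qmap K n a)) ?_ fun x hx => ?_
    · rw [hcard, hm]
    · rw [← htrunc, ← hcomp, LinearMap.mem_ker.1 hx, map_zero]
  refine hci (coeff_eq_zero_of_qmap K (n - m) c (LinearMap.range (qmap K n a)) ?_ ?_ i hi)
  · rw [hcard]
    exact Nat.pow_le_pow_right Fintype.card_pos (by omega)
  · rintro _ ⟨x, rfl⟩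
    rw [hcomp, htrunc, qmap_apply]
    exact Finset.sum_eq_zero fun j hj => by rw [hb0 j (Finset.mem_range.1 hj), zero_mul]

end Dickson

/-- Theorem (main theorem): for `f(x) = ∑_{i=0}^{n-1} a_i x^{q^i} ∈ F_{q^n}[x]` and
`0 ≤ μ ≤ n-1`, the `F_q`-dimension of the kernel of the `F_q`-linear map induced by `f`
equals `μ` (equivalently, the kernel has exactly `q^μ` elements) iff
`det D_0(f) = ⋯ = det D_{μ-1}(f) = 0` and `det D_μ(f) ≠ 0`. -/
theorem stmt_0 (p e q n : ℕ) (hp : p.Prime) (he : 0 < e) (hq : q = p ^ e)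
    (hn : 0 < n) (F : Type*) [Field F] [Fintype F] (hF : Fintype.card F = q ^ n)
    (a : ℕ → F) (μ : ℕ) (hμ : μ ≤ n - 1) :
    Nat.card {x : F // ∑ i ∈ Finset.range n, a i * x ^ q ^ i = 0} = q ^ μ ↔
      (∀ m, m < μ → (dickSub q n m a).det = 0) ∧ (dickSub q n μ a).det ≠ 0 := by
  have : Fact p.Prime := ⟨hp⟩
  have hFp : Fintype.card F = p ^ (e * n) := by rw [hF, hq, ← pow_mul]
  have : CharP F p := charP_of_card_eq_prime_pow hFp
  -- a copy `K` of the field with `q` elements inside `F`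
  let K := GaloisField p e
  have : Fintype K := Fintype.ofFinite K
  have hK : Fintype.card K = q := by
    rw [← Nat.card_eq_fintype_card, GaloisField.card p e he.ne', hq]
  let : Algebra (ZMod p) F := ZMod.algebra F p
  have hdvd : Module.finrank (ZMod p) K ∣ Module.finrank (ZMod p) F := by
    rw [GaloisField.finrank p he.ne']
    have h1 : p ^ Module.finrank (ZMod p) F = p ^ (e * n) := by
      rw [← hFp, FiniteField.pow_finrank_eq_card p]
    rw [Nat.pow_right_injective hp.two_le h1]
    exact dvd_mul_right e n
  obtain ⟨φ⟩ := FiniteField.nonempty_algHom_of_finrank_dvd hdvd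
  let : Algebra K F := φ.toRingHom.toAlgebra
  have hq1 : 1 < q := hK ▸ Fintype.one_lt_card
  have hF' : Nat.card F = Fintype.card K ^ n := by rw [Nat.card_eq_fintype_card, hF, hK]
  have hcard (V : Submodule K F) : Nat.card V = q ^ Module.finrank K V := by
    rw [Module.natCard_eq_pow_finrank (K := K), Nat.card_eq_fintype_card, hK]
  have hfr : Module.finrank K F = n := by
    apply Nat.pow_right_injective hq1
    change q ^ _ = q ^ _
    rw [← hF, ← hK, ← Nat.card_eq_fintype_card (α := F), ← Nat.card_eq_fintype_card (α := K),
      ← Module.natCard_eq_pow_finrank]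
  have hker : Nat.card {x : F // ∑ i ∈ Finset.range n, a i * x ^ q ^ i = 0} =
      q ^ Module.finrank K (LinearMap.ker (qmap K n a)) := by
    rw [← hcard]
    refine Nat.card_congr (Equiv.subtypeEquivRight fun x => ?_)
    rw [LinearMap.mem_ker, qmap_apply, hK]
  have hlt := dickSub_det_eq_zero_of_lt K n hF' hfr a
  have hne := dickSub_det_ne_zero K n hF' hfr a _ rfl
  rw [hK] at hlt hne
  rw [hker, (Nat.pow_right_injective hq1).eq_iff]
  constructor
  · rintro rfl
    exact ⟨hlt, hne⟩
  · rintro ⟨h1, h2⟩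
    exact le_antisymm (not_lt.1 fun h => h2 (hlt _ h)) (not_lt.1 fun h => hne (h1 _ h))
end

section
/- Let q be a prime power and let f(x) = Σ_{i=0}^{k} a_i x^{q^i} and g(x) = Σ_{i=0}^{l} b_i x^{q^i} be q-polynomials over the algebraic closure of F_q with a_k b_l ≠ 0. Let μ be the q-degree of gcd(f,g), i.e. deg gcd(f,g) = q^μ. Then for 0 ≤ μ ≤ min{k,l}: the q-degree of gcd(f,g) equals μ if and only if det(R_{0,q}(f,g)) = det(R_{1,q}(f,g)) = … = det(R_{μ−1,q}(f,g)) = 0 and det(R_{μ,q}(f,g)) ≠ 0. -/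
/-!
The `q`-polynomials form a (noncommutative) right Euclidean domain under addition and composition,
with `deg (u ∘ f) = deg u * deg f`. Running the Euclidean algorithm on nonzero `f`, `g` produces a
`q`-polynomial `h` which is also their gcd in the ordinary ring `K[X]` (because `f ∣ u ∘ f`), and
the same induction controls the relations `u ∘ f = v ∘ g`: every one with `v ≠ 0` has
`deg v * deg h ≥ deg f`, and equality occurs (`exists_qgcd`).

Reversing the columns, the rows of `R_{m,q}(f,g)` list the coefficients of the polynomials
`f ^ q ^ s` (`s < l - m`) and `g ^ q ^ s` (`s < k - m`) at the monomials `X ^ q ^ n`,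
`m ≤ n < k + l - m`. Hence `det R_{m,q}(f,g) = 0` iff there are `q`-polynomials `(u, v) ≠ (0, 0)`
of `q`-degrees less than `l - m` and `k - m` with `deg (u ∘ f + v ∘ g) < q ^ m`. Let
`deg h = q ^ d`. For `m < d` a minimal relation `u ∘ f = v ∘ g` provides such a pair
(`det_eq_zero_of_lt`). For `m = d` the polynomial `u ∘ f + v ∘ g` is divisible by `h` and of
smaller degree, so it vanishes, and the lower bound on `deg v` forces `u = v = 0`
(`det_ne_zero_of_eq`). Thus `d` is the first index with nonzero determinant.
-/

open Polynomial

/-- The `m`-th scalar `q`-subresultant matrix `R_{m,q}(f,g)` of the `q`-polynomials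
`f = ∑_{i=0}^k a_i x^{q^i}` and `g = ∑_{i=0}^l b_i x^{q^i}`: a
`(k+l-2m) × (k+l-2m)` matrix whose `(i,j)` entry is `a_{k+i-j}^{q^{l-m-1-i}}` for
`0 ≤ i ≤ l-m-1` and `b_{l+(i-(l-m))-j}^{q^{k-m-1-(i-(l-m))}}` for
`l-m ≤ i ≤ k+l-2m-1`, out-of-range coefficients being `0`. -/
noncomputable def Rmat (q k l m : ℕ) {K : Type*} [Field K] (a b : ℕ → K) :
    Matrix (Fin (k + l - 2 * m)) (Fin (k + l - 2 * m)) K :=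
  Matrix.of fun i j =>
    if i.val < l - m then
      if i.val ≤ j.val ∧ j.val ≤ k + i.val then
        a (k + i.val - j.val) ^ q ^ (l - m - 1 - i.val) else 0
    else
      if i.val - (l - m) ≤ j.val ∧ j.val ≤ l + (i.val - (l - m)) then
        b (l + (i.val - (l - m)) - j.val) ^ q ^ (k - m - 1 - (i.val - (l - m))) else 0

namespace QSubres

variable {K : Type*} [Field K]

/-- The space of `q`-polynomials `∑ aᵢ X ^ q ^ i` inside `K[X]`. -/
noncomputable def qPoly (K : Type*) [Field K] (q : ℕ) : Submodule K K[X] :=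
  Submodule.span K (Set.range fun i : ℕ => (X : K[X]) ^ q ^ i)

/-! ### Basic properties of `q`-polynomials -/

lemma X_pow_mem (q i : ℕ) : (X : K[X]) ^ q ^ i ∈ qPoly K q :=
  Submodule.subset_span ⟨i, rfl⟩

lemma X_mem (q : ℕ) : (X : K[X]) ∈ qPoly K q := by
  simpa using X_pow_mem (K := K) q 0

lemma C_mul_mem {q : ℕ} {f : K[X]} (c : K) (hf : f ∈ qPoly K q) : C c * f ∈ qPoly K q := by
  rw [← smul_eq_C_mul]
  exact Submodule.smul_mem _ _ hf

lemma sum_mem_qPoly (q n : ℕ) (c : ℕ → K) (s : ℕ → ℕ) :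
    ∑ i ∈ Finset.range n, C (c i) * X ^ q ^ s i ∈ qPoly K q :=
  Submodule.sum_mem _ fun _ _ => C_mul_mem _ (X_pow_mem q _)

lemma coeff_eq_zero {q : ℕ} {f : K[X]} (hf : f ∈ qPoly K q) {n : ℕ} (hn : ∀ i, n ≠ q ^ i) :
    f.coeff n = 0 := by
  induction hf using Submodule.span_induction with
  | mem x h =>
    obtain ⟨i, rfl⟩ := h
    simp [coeff_X_pow, hn i]
  | zero => simp
  | add x y _ _ hx hy => simp [hx, hy]
  | smul c x _ hx => simp [hx]

lemma natDegree_eq_pow {q : ℕ} {f : K[X]} (hf : f ∈ qPoly K q) (h0 : f ≠ 0) :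
    ∃ i, f.natDegree = q ^ i := by
  by_contra! h
  exact h0 (leadingCoeff_eq_zero.1 (coeff_eq_zero hf h))

lemma X_dvd {q : ℕ} (hq : 1 < q) {f : K[X]} (hf : f ∈ qPoly K q) : X ∣ f :=
  X_dvd_iff.2 (coeff_eq_zero hf fun i => (pow_pos (by omega) i).ne)

lemma dvd_comp {q : ℕ} (hq : 1 < q) {u : K[X]} (hu : u ∈ qPoly K q) (f : K[X]) :
    f ∣ u.comp f := by
  obtain ⟨w, rfl⟩ := X_dvd hq hu
  simp

lemma comp_ne_zero {q : ℕ} (hq : 1 < q) {u f : K[X]} (hu : u ∈ qPoly K q) (hf : f ∈ qPoly K q)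
    (hu0 : u ≠ 0) (hf0 : f ≠ 0) : u.comp f ≠ 0 := by
  obtain ⟨i, hi⟩ := natDegree_eq_pow hu hu0
  obtain ⟨j, hj⟩ := natDegree_eq_pow hf hf0
  intro h
  have := natDegree_comp (p := u) (q := f)
  rw [h, hi, hj, natDegree_zero] at this
  have : 0 < q ^ i * q ^ j := by positivity
  omega

section Frobenius

variable {p e : ℕ} [Fact p.Prime] [CharP K p]

lemma add_pow_q (x y : K[X]) (s : ℕ) :
    (x + y) ^ (p ^ e) ^ s = x ^ (p ^ e) ^ s + y ^ (p ^ e) ^ s := by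
  rw [← pow_mul]
  exact add_pow_char_pow (R := K[X]) x y p (e * s)

lemma sum_pow_q (n s : ℕ) (F : ℕ → K[X]) :
    (∑ i ∈ Finset.range n, F i) ^ (p ^ e) ^ s = ∑ i ∈ Finset.range n, F i ^ (p ^ e) ^ s := by
  rw [← pow_mul]
  exact sum_pow_char_pow (R := K[X]) p (e * s) _ F

lemma pow_mem {f : K[X]} (hf : f ∈ qPoly K (p ^ e)) (s : ℕ) :
    f ^ (p ^ e) ^ s ∈ qPoly K (p ^ e) := by
  have hp := (Fact.out : p.Prime).pos
  induction hf using Submodule.span_induction with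
  | mem x h =>
    obtain ⟨i, rfl⟩ := h
    rw [← pow_mul, ← pow_add]
    exact X_pow_mem _ _
  | zero => rw [zero_pow (by positivity)]; exact Submodule.zero_mem _
  | add x y _ _ hx hy => rw [add_pow_q]; exact Submodule.add_mem _ hx hy
  | smul c x _ hx => rw [_root_.smul_pow]; exact Submodule.smul_mem _ _ hx

lemma comp_mem {u f : K[X]} (hu : u ∈ qPoly K (p ^ e)) (hf : f ∈ qPoly K (p ^ e)) :
    u.comp f ∈ qPoly K (p ^ e) := by
  induction hu using Submodule.span_induction with
  | mem x h =>
    obtain ⟨i, rfl⟩ := h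
    simpa using pow_mem hf i
  | zero => simp
  | add x y _ _ hx hy => rw [add_comp]; exact Submodule.add_mem _ hx hy
  | smul c x _ hx => rw [smul_comp]; exact Submodule.smul_mem _ _ hx

lemma comp_add' {u : K[X]} (hu : u ∈ qPoly K (p ^ e)) (f g : K[X]) :
    u.comp (f + g) = u.comp f + u.comp g := by
  induction hu using Submodule.span_induction with
  | mem x h =>
    obtain ⟨i, rfl⟩ := h
    simpa using add_pow_q f g i
  | zero => simp
  | add x y _ _ hx hy => simp only [add_comp, hx, hy]; ring
  | smul c x _ hx => simp only [smul_comp, hx, smul_add]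

/-! ### Right division and the Euclidean algorithm -/

lemma exists_div (he : 0 < e) {f g : K[X]} (hf : f ∈ qPoly K (p ^ e)) (hg : g ∈ qPoly K (p ^ e))
    (hg0 : g ≠ 0) : ∃ w ∈ qPoly K (p ^ e), ∃ r ∈ qPoly K (p ^ e),
      f = w.comp g + r ∧ r.degree < g.degree := by
  have hq : 1 < p ^ e := Nat.one_lt_pow he.ne' (Fact.out : p.Prime).one_lt
  induction hd : f.degree using WellFoundedLT.induction generalizing f with
  | ind N ih =>
    subst hd
    rcases lt_or_ge f.degree g.degree with h | h
    · exact ⟨0, Submodule.zero_mem _, f, hf, by simp, h⟩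
    have hf0 : f ≠ 0 := by
      rintro rfl
      rw [degree_zero, le_bot_iff, degree_eq_bot] at h
      exact hg0 h
    obtain ⟨i, hi⟩ := natDegree_eq_pow hf hf0
    obtain ⟨j, hj⟩ := natDegree_eq_pow hg hg0
    have hji : j ≤ i := by
      have := natDegree_le_natDegree h
      rw [hi, hj] at this
      exact (Nat.pow_le_pow_iff_right hq).1 this
    have hlg : g.leadingCoeff ≠ 0 := leadingCoeff_ne_zero.2 hg0
    have hlf : f.leadingCoeff ≠ 0 := leadingCoeff_ne_zero.2 hf0
    -- the monomial `q`-polynomial whose composition with `g` has the leading term of `f`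
    set c : K := f.leadingCoeff / g.leadingCoeff ^ (p ^ e) ^ (i - j) with hc
    have hc0 : c ≠ 0 := div_ne_zero hlf (pow_ne_zero _ hlg)
    set w : K[X] := C c * X ^ (p ^ e) ^ (i - j) with hw
    have hwm : w ∈ qPoly K (p ^ e) := C_mul_mem _ (X_pow_mem _ _)
    have hwg : w.comp g = C c * g ^ (p ^ e) ^ (i - j) := by simp [hw]
    have hwg0 : w.comp g ≠ 0 := by
      rw [hwg]; exact mul_ne_zero (C_ne_zero.2 hc0) (pow_ne_zero _ hg0)
    have hlt : (f - w.comp g).degree < f.degree := by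
      refine degree_sub_lt_left ?_ hf0 ?_
      · rw [degree_eq_natDegree hf0, degree_eq_natDegree hwg0, hwg, natDegree_C_mul hc0,
          natDegree_pow, hi, hj, ← pow_add, Nat.sub_add_cancel hji]
      · rw [hwg, leadingCoeff_mul, leadingCoeff_C, leadingCoeff_pow, hc,
          div_mul_cancel₀ _ (pow_ne_zero _ hlg)]
    obtain ⟨w', hw', r, hr, h1, h2⟩ :=
      ih _ hlt (Submodule.sub_mem _ hf (comp_mem hwm hg)) rfl
    refine ⟨w + w', Submodule.add_mem _ hwm hw', r, hr, ?_, h2⟩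
    rw [add_comp, add_assoc, ← h1]
    ring

/-- Euclid's algorithm for `q`-polynomials: `h` is a gcd of `f` and `g` in `K[X]`, and in the
relations `u ∘ f = v ∘ g` with `v ≠ 0` the least possible degree of `v` is `deg f / deg h`. -/
theorem exists_qgcd (he : 0 < e) {f g : K[X]} (hf : f ∈ qPoly K (p ^ e))
    (hg : g ∈ qPoly K (p ^ e)) (hf0 : f ≠ 0) :
    ∃ h ∈ qPoly K (p ^ e), h ≠ 0 ∧ h ∣ f ∧ h ∣ g ∧ (∀ c, c ∣ f → c ∣ g → c ∣ h) ∧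
      (∃ u ∈ qPoly K (p ^ e), ∃ v ∈ qPoly K (p ^ e), v ≠ 0 ∧ u.comp f = v.comp g ∧
        v.natDegree * h.natDegree = f.natDegree) ∧
      (∀ u ∈ qPoly K (p ^ e), ∀ v ∈ qPoly K (p ^ e), v ≠ 0 → u.comp f = v.comp g →
        f.natDegree ≤ v.natDegree * h.natDegree) := by
  have hq : 1 < p ^ e := Nat.one_lt_pow he.ne' (Fact.out : p.Prime).one_lt
  induction hd : f.degree using WellFoundedLT.induction generalizing f g with
  | ind N ih =>
    subst hd
    obtain ⟨w, hw, r, hr, rfl, hlt⟩ := exists_div he hg hf hf0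
    by_cases hr0 : r = 0
    · subst hr0
      refine ⟨f, hf, hf0, dvd_rfl, by simpa using dvd_comp hq hw f, fun c h _ => h,
        ⟨w, hw, X, X_mem _, X_ne_zero, by simp, by simp⟩, ?_⟩
      intro u _ v hv hv0 _
      obtain ⟨i, hi⟩ := natDegree_eq_pow hv hv0
      rw [hi]
      exact Nat.le_mul_of_pos_left _ (by positivity)
    · obtain ⟨h, hh, hh0, hhr, hhf, hmax, ⟨u, hu, v, hv, hv0, huv, hdeg⟩, hmin⟩ :=
        ih _ hlt hr hf hr0 rfl
      have hrpos : 0 < r.natDegree := by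
        obtain ⟨i, hi⟩ := natDegree_eq_pow hr hr0
        rw [hi]; positivity
      have hfw : f ∣ w.comp f := dvd_comp hq hw f
      refine ⟨h, hh, hh0, hhf, dvd_add (hhf.trans hfw) hhr, ?_, ?_, ?_⟩
      · intro c hcf hcg
        exact hmax c ((dvd_add_right (hcf.trans hfw)).1 hcg) hcf
      · refine ⟨u.comp w + v, Submodule.add_mem _ (comp_mem hu hw) hv, u, hu, ?_, ?_, ?_⟩
        · rintro rfl
          exact comp_ne_zero hq hv hf hv0 hf0 (by simpa using huv.symm)
        · rw [comp_add' hu, add_comp, comp_assoc, huv]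
        · have h1 := congrArg natDegree huv
          rw [natDegree_comp, natDegree_comp] at h1
          refine Nat.eq_of_mul_eq_mul_right hrpos ?_
          calc u.natDegree * h.natDegree * r.natDegree
              = (u.natDegree * r.natDegree) * h.natDegree := by ring
            _ = (v.natDegree * h.natDegree) * f.natDegree := by rw [h1]; ring
            _ = f.natDegree * r.natDegree := by rw [hdeg]; ring
      · intro u' hu' v' hv' hv0' huv'
        -- cancel the quotient: `(u' - v' ∘ w) ∘ f = v' ∘ r`
        have hrel : v'.comp r = (u' - v'.comp w).comp f := by
          rw [sub_comp, comp_assoc, huv', comp_add' hv']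
          ring
        have hz0 : u' - v'.comp w ≠ 0 := by
          intro hz
          rw [hz, zero_comp] at hrel
          exact comp_ne_zero hq hv' hr hv0' hr0 hrel
        have h1 := hmin v' hv' _ (Submodule.sub_mem _ hu' (comp_mem hv' hw)) hz0 hrel
        have h2 := congrArg natDegree hrel
        rw [natDegree_comp, natDegree_comp] at h2
        refine Nat.le_of_mul_le_mul_right ?_ hrpos
        calc f.natDegree * r.natDegree
            ≤ f.natDegree * ((u' - v'.comp w).natDegree * h.natDegree) :=
              Nat.mul_le_mul_left _ h1
          _ = ((u' - v'.comp w).natDegree * f.natDegree) * h.natDegree := by ring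
          _ = v'.natDegree * h.natDegree * r.natDegree := by rw [← h2]; ring

/-! ### Subresultant matrices as coefficient matrices -/

/-- The `q`-polynomial `∑_{i ≤ k} aᵢ X ^ q ^ i`. -/
noncomputable def qp (q k : ℕ) (a : ℕ → K) : K[X] :=
  ∑ i ∈ Finset.range (k + 1), C (a i) * X ^ q ^ i

lemma qp_mem (q k : ℕ) (a : ℕ → K) : qp q k a ∈ qPoly K q := sum_mem_qPoly q _ a fun i => i

lemma coeff_sum {q : ℕ} (hq : 1 < q) (N : ℕ) (c : ℕ → K) (n : ℕ) :
    (∑ i ∈ Finset.range N, C (c i) * X ^ q ^ i).coeff (q ^ n) = if n < N then c n else 0 := by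
  simp [coeff_X_pow, Nat.pow_right_inj hq]

lemma coeff_qp {q : ℕ} (hq : 1 < q) (k : ℕ) (a : ℕ → K) (n : ℕ) :
    (qp q k a).coeff (q ^ n) = if n ≤ k then a n else 0 := by
  rw [qp, coeff_sum hq]; simp

lemma eq_sum {q : ℕ} (hq : 1 < q) {u : K[X]} (hu : u ∈ qPoly K q) {N : ℕ}
    (hN : u.natDegree < q ^ N) :
    u = ∑ i ∈ Finset.range N, C (u.coeff (q ^ i)) * X ^ q ^ i := by
  ext n
  by_cases h : ∃ i, n = q ^ i
  · obtain ⟨i, rfl⟩ := h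
    rw [coeff_sum hq]
    split_ifs with hi
    · rfl
    · exact coeff_eq_zero_of_natDegree_lt
        (hN.trans_le (Nat.pow_le_pow_right (by omega) (by omega)))
  · push Not at h
    rw [coeff_eq_zero hu h, coeff_eq_zero (sum_mem_qPoly q N _ _) h]

lemma natDegree_lt_of_coeff {q : ℕ} (hq : 1 < q) {u : K[X]} (hu : u ∈ qPoly K q) {N : ℕ}
    (h : ∀ n, N ≤ n → u.coeff (q ^ n) = 0) : u.natDegree < q ^ N := by
  by_cases h0 : u = 0
  · rw [h0, natDegree_zero]; positivity
  obtain ⟨i, hi⟩ := natDegree_eq_pow hu h0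
  rw [hi]
  refine Nat.pow_lt_pow_right hq ?_
  by_contra! hNi
  apply h0
  rw [← leadingCoeff_eq_zero, leadingCoeff, hi, h i hNi]

lemma natDegree_qp_le {q : ℕ} (hq : 1 < q) (k : ℕ) (a : ℕ → K) :
    (qp q k a).natDegree ≤ q ^ k := by
  by_contra! hlt
  have h0 : qp q k a ≠ 0 := by
    rintro h; simp [h] at hlt
  obtain ⟨i, hi⟩ := natDegree_eq_pow (qp_mem q k a) h0
  rw [hi] at hlt
  have hki := (Nat.pow_lt_pow_iff_right hq).1 hlt
  apply h0
  rw [← leadingCoeff_eq_zero, leadingCoeff, hi, coeff_qp hq, if_neg (by omega)]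

lemma natDegree_qp {q : ℕ} (hq : 1 < q) {k : ℕ} {a : ℕ → K} (ha : a k ≠ 0) :
    (qp q k a).natDegree = q ^ k := by
  refine le_antisymm (natDegree_qp_le hq k a) (le_natDegree_of_ne_zero ?_)
  rw [coeff_qp hq]
  simpa using ha

lemma coeff_qp_pow (he : 0 < e) (k : ℕ) (a : ℕ → K) (s n : ℕ) :
    (qp (p ^ e) k a ^ (p ^ e) ^ s).coeff ((p ^ e) ^ n) =
      if s ≤ n ∧ n ≤ k + s then a (n - s) ^ (p ^ e) ^ s else 0 := by
  have hq : 1 < p ^ e := Nat.one_lt_pow he.ne' (Fact.out : p.Prime).one_lt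
  rw [qp, sum_pow_q, finsetSum_coeff]
  simp only [mul_pow, ← C_pow, coeff_C_mul]
  simp only [← pow_mul X, ← pow_add (p ^ e), coeff_X_pow, Nat.pow_right_inj hq]
  split_ifs with h
  · rw [Finset.sum_eq_single (n - s)]
    · simp [Nat.sub_add_cancel h.1]
    · intro i _ hi
      rw [if_neg (by omega), mul_zero]
    · intro hi
      simp at hi
      omega
  · refine Finset.sum_eq_zero fun i hi => ?_
    simp at hi
    rw [if_neg (by omega), mul_zero]

/-- The polynomial whose coefficients at `X ^ q ^ (k + l - m - 1 - j)` form row `i` of the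
`m`-th subresultant matrix. -/
noncomputable def row (q k l m : ℕ) (a b : ℕ → K) (i : ℕ) : K[X] :=
  if i < l - m then qp q k a ^ q ^ (l - m - 1 - i)
  else qp q l b ^ q ^ (k - m - 1 - (i - (l - m)))

lemma Rmat_apply (he : 0 < e) {k l m : ℕ} (hl : m ≤ l) (a b : ℕ → K)
    (i j : Fin (k + l - 2 * m)) :
    Rmat (p ^ e) k l m a b i j =
      (row (p ^ e) k l m a b i).coeff ((p ^ e) ^ (k + l - m - 1 - j)) := by
  obtain ⟨i, hi⟩ := i
  obtain ⟨j, hj⟩ := j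
  simp only [Rmat, Matrix.of_apply, row]
  by_cases h : i < l - m
  · rw [if_pos h, if_pos h, coeff_qp_pow he]
    refine if_congr (by omega) ?_ rfl
    rw [show k + l - m - 1 - j - (l - m - 1 - i) = k + i - j by omega]
  · rw [if_neg h, if_neg h, coeff_qp_pow he]
    refine if_congr (by omega) ?_ rfl
    rw [show k + l - m - 1 - j - (k - m - 1 - (i - (l - m))) = l + (i - (l - m)) - j by omega]

/-- A linear combination of the rows is `u ∘ f + v ∘ g`, the coefficients of `u` and `v` being
those of the combination in reverse order. -/
lemma sum_row {q k l m : ℕ} (hk : m ≤ k) (hl : m ≤ l) (a b c d : ℕ → K) :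
    ∑ i ∈ Finset.range (k + l - 2 * m),
      C (if i < l - m then c (l - m - 1 - i) else d (k - m - 1 - (i - (l - m)))) *
        row q k l m a b i =
    (∑ s ∈ Finset.range (l - m), C (c s) * X ^ q ^ s).comp (qp q k a) +
    (∑ s ∈ Finset.range (k - m), C (d s) * X ^ q ^ s).comp (qp q l b) := by
  have hN : k + l - 2 * m = (l - m) + (k - m) := by omega
  rw [hN, Finset.sum_range_add]
  congr 1
  · rw [← Finset.sum_range_reflect, sum_comp]
    refine Finset.sum_congr rfl fun i hi => ?_
    have hi := Finset.mem_range.1 hi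
    have h1 : l - m - 1 - i < l - m := by omega
    have h2 : l - m - 1 - (l - m - 1 - i) = i := by omega
    simp [row, h1, h2]
  · rw [← Finset.sum_range_reflect, sum_comp]
    refine Finset.sum_congr rfl fun i hi => ?_
    have hi := Finset.mem_range.1 hi
    have h2 : k - m - 1 - (k - m - 1 - i) = i := by omega
    simp [row, h2]

/-- The determinant vanishes iff a nontrivial combination `u ∘ f + v ∘ g`, with `u` and `v` of
`q`-degrees less than `l - m` and `k - m`, has degree less than `q ^ m`. -/
lemma det_eq_zero_iff (he : 0 < e) {k l m : ℕ} (hk : m ≤ k) (hl : m ≤ l) (a b : ℕ → K) :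
    (Rmat (p ^ e) k l m a b).det = 0 ↔
      ∃ u ∈ qPoly K (p ^ e), ∃ v ∈ qPoly K (p ^ e), (u ≠ 0 ∨ v ≠ 0) ∧
        u.natDegree < (p ^ e) ^ (l - m) ∧ v.natDegree < (p ^ e) ^ (k - m) ∧
        (u.comp (qp (p ^ e) k a) + v.comp (qp (p ^ e) l b)).natDegree < (p ^ e) ^ m := by
  have hq : 1 < p ^ e := Nat.one_lt_pow he.ne' (Fact.out : p.Prime).one_lt
  have hN : k + l - 2 * m = (l - m) + (k - m) := by omega
  have hvec : ∀ y : ℕ → K, ∀ j : Fin (k + l - 2 * m),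
      Matrix.vecMul (fun i : Fin (k + l - 2 * m) => y i) (Rmat (p ^ e) k l m a b) j =
        (∑ i ∈ Finset.range (k + l - 2 * m), C (y i) * row (p ^ e) k l m a b i).coeff
          ((p ^ e) ^ (k + l - m - 1 - j)) := by
    intro y j
    rw [finsetSum_coeff, Finset.sum_range]
    simp only [Matrix.vecMul, dotProduct, coeff_C_mul, Rmat_apply he hl]
  rw [← Matrix.exists_vecMul_eq_zero_iff]
  constructor
  · rintro ⟨x, hx0, hx⟩
    let y : ℕ → K := fun n => if h : n < k + l - 2 * m then x ⟨n, h⟩ else 0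
    let c : ℕ → K := fun s => y (l - m - 1 - s)
    let d : ℕ → K := fun s => y (l - m + (k - m - 1 - s))
    have hy : ∀ i < k + l - 2 * m,
        (if i < l - m then c (l - m - 1 - i) else d (k - m - 1 - (i - (l - m)))) = y i := by
      intro i hi
      split_ifs with h
      · exact congrArg y (by omega)
      · exact congrArg y (by omega)
    have hxy : x = fun i : Fin (k + l - 2 * m) => y i := by
      ext i
      simp [y]
    have hsum := sum_row (q := p ^ e) hk hl a b c d
    rw [Finset.sum_congr rfl fun i hi => by rw [hy i (Finset.mem_range.1 hi)]] at hsum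
    have hu := sum_mem_qPoly (p ^ e) (l - m) c fun i => i
    have hv := sum_mem_qPoly (p ^ e) (k - m) d fun i => i
    have hcu := coeff_sum hq (l - m) c
    have hcv := coeff_sum hq (k - m) d
    set u := ∑ s ∈ Finset.range (l - m), C (c s) * X ^ (p ^ e) ^ s
    set v := ∑ s ∈ Finset.range (k - m), C (d s) * X ^ (p ^ e) ^ s
    have hud : u.natDegree < (p ^ e) ^ (l - m) :=
      natDegree_lt_of_coeff hq hu fun n hn => by rw [hcu, if_neg (by omega)]
    have hvd : v.natDegree < (p ^ e) ^ (k - m) :=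
      natDegree_lt_of_coeff hq hv fun n hn => by rw [hcv, if_neg (by omega)]
    refine ⟨u, hu, v, hv, ?_, hud, hvd, ?_⟩
    · by_contra! h0
      apply hx0
      rw [hxy]
      ext i
      rw [Pi.zero_apply, ← hy i i.2]
      have hi := i.2
      split_ifs with h
      · have := hcu (l - m - 1 - i)
        rw [if_pos (by omega), h0.1, coeff_zero] at this
        exact this.symm
      · have := hcv (k - m - 1 - (i - (l - m)))
        rw [if_pos (by omega), h0.2, coeff_zero] at this
        exact this.symm
    · refine natDegree_lt_of_coeff hq (Submodule.add_mem _ (comp_mem hu (qp_mem _ _ _))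
        (comp_mem hv (qp_mem _ _ _))) fun n hn => ?_
      by_cases hn' : n < k + l - m
      · have h1 := hvec y ⟨k + l - m - 1 - n, by omega⟩
        rw [← hxy, hx, hsum, Pi.zero_apply] at h1
        rw [h1]
        congr 2
        simp only
        omega
      · -- beyond the last column both compositions have too small a degree
        have aux : ∀ (w : K[X]) (r t : ℕ) (c' : ℕ → K), w.natDegree < (p ^ e) ^ r →
            r + t ≤ n → (w.comp (qp (p ^ e) t c')).coeff ((p ^ e) ^ n) = 0 := by
          intro w r t c' hw hrt
          apply coeff_eq_zero_of_natDegree_lt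
          rw [natDegree_comp]
          calc w.natDegree * (qp (p ^ e) t c').natDegree
              ≤ w.natDegree * (p ^ e) ^ t := Nat.mul_le_mul_left _ (natDegree_qp_le hq t c')
            _ < (p ^ e) ^ r * (p ^ e) ^ t := Nat.mul_lt_mul_of_pos_right hw (by positivity)
            _ = (p ^ e) ^ (r + t) := (pow_add _ _ _).symm
            _ ≤ (p ^ e) ^ n := Nat.pow_le_pow_right (by omega) hrt
        rw [coeff_add, aux u _ _ _ hud (by omega), aux v _ _ _ hvd (by omega), add_zero]
  · rintro ⟨u, hu, v, hv, h0, hud, hvd, hdeg⟩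
    have hu' := eq_sum hq hu hud
    have hv' := eq_sum hq hv hvd
    have hsum := sum_row (q := p ^ e) hk hl a b
      (fun s => u.coeff ((p ^ e) ^ s)) (fun s => v.coeff ((p ^ e) ^ s))
    rw [← hu', ← hv'] at hsum
    let y : ℕ → K := fun i => if i < l - m then u.coeff ((p ^ e) ^ (l - m - 1 - i))
      else v.coeff ((p ^ e) ^ (k - m - 1 - (i - (l - m))))
    refine ⟨fun i => y i, ?_, ?_⟩
    · intro hy
      have hy' : ∀ i < k + l - 2 * m, y i = 0 := fun i hi => congrFun hy ⟨i, hi⟩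
      have hu0 : u = 0 := by
        rw [hu']
        refine Finset.sum_eq_zero fun s hs => ?_
        have hs := Finset.mem_range.1 hs
        have := hy' (l - m - 1 - s) (by omega)
        simp only [y] at this
        rw [if_pos (by omega), show l - m - 1 - (l - m - 1 - s) = s by omega] at this
        rw [this, C_0, zero_mul]
      have hv0 : v = 0 := by
        rw [hv']
        refine Finset.sum_eq_zero fun s hs => ?_
        have hs := Finset.mem_range.1 hs
        have := hy' (l - m + (k - m - 1 - s)) (by omega)
        simp only [y] at this
        rw [if_neg (by omega),
          show k - m - 1 - (l - m + (k - m - 1 - s) - (l - m)) = s by omega] at this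
        rw [this, C_0, zero_mul]
      tauto
    · ext j
      rw [hvec y j, hsum, Pi.zero_apply]
      refine coeff_eq_zero_of_natDegree_lt (hdeg.trans_le ?_)
      have hj := j.2
      exact Nat.pow_le_pow_right (by omega) (by omega)

variable {k l : ℕ} {a b : ℕ → K}

/-- A minimal relation `u ∘ f = v ∘ g` has `deg u = q ^ (l - d)` and `deg v = q ^ (k - d)`, which
is small enough for every `m < d`. -/
lemma det_eq_zero_of_lt (he : 0 < e) (ha : a k ≠ 0) (hb : b l ≠ 0) {m d : ℕ} (hmd : m < d)
    (hdk : d ≤ k) (hdl : d ≤ l) {u v : K[X]} (hu : u ∈ qPoly K (p ^ e))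
    (hv : v ∈ qPoly K (p ^ e)) (hv0 : v ≠ 0)
    (huv : u.comp (qp (p ^ e) k a) = v.comp (qp (p ^ e) l b))
    (hdeg : v.natDegree * (p ^ e) ^ d = (p ^ e) ^ k) :
    (Rmat (p ^ e) k l m a b).det = 0 := by
  have hq : 1 < p ^ e := Nat.one_lt_pow he.ne' (Fact.out : p.Prime).one_lt
  have hvd : v.natDegree = (p ^ e) ^ (k - d) := by
    refine Nat.eq_of_mul_eq_mul_right (m := (p ^ e) ^ d) (by positivity) ?_
    rw [hdeg, ← pow_add, Nat.sub_add_cancel hdk]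
  have hud : u.natDegree = (p ^ e) ^ (l - d) := by
    have h1 := congrArg natDegree huv
    rw [natDegree_comp, natDegree_comp, natDegree_qp hq ha, natDegree_qp hq hb, hvd,
      ← pow_add] at h1
    refine Nat.eq_of_mul_eq_mul_right (m := (p ^ e) ^ k) (by positivity) ?_
    rw [h1, ← pow_add]
    congr 1
    omega
  rw [det_eq_zero_iff he (by omega) (by omega)]
  refine ⟨u, hu, -v, Submodule.neg_mem _ hv, Or.inr (neg_ne_zero.2 hv0), ?_, ?_, ?_⟩
  · rw [hud]; exact Nat.pow_lt_pow_right hq (by omega)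
  · rw [natDegree_neg, hvd]; exact Nat.pow_lt_pow_right hq (by omega)
  · rw [neg_comp, huv, add_neg_cancel, natDegree_zero]; positivity

/-- At `m = d` a combination `u ∘ f + v ∘ g` of degree less than `deg h` is zero, as `h` divides
it; the lower bound on the degrees in such relations then leaves only the trivial one. -/
lemma det_ne_zero_of_eq (he : 0 < e) (ha : a k ≠ 0) {d : ℕ} (hdk : d ≤ k) (hdl : d ≤ l)
    {h : K[X]} (hd : h.natDegree = (p ^ e) ^ d) (hf : h ∣ qp (p ^ e) k a)
    (hg : h ∣ qp (p ^ e) l b)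
    (hmin : ∀ u ∈ qPoly K (p ^ e), ∀ v ∈ qPoly K (p ^ e), v ≠ 0 →
      u.comp (qp (p ^ e) k a) = v.comp (qp (p ^ e) l b) →
      (p ^ e) ^ k ≤ v.natDegree * (p ^ e) ^ d) :
    (Rmat (p ^ e) k l d a b).det ≠ 0 := by
  have hq : 1 < p ^ e := Nat.one_lt_pow he.ne' (Fact.out : p.Prime).one_lt
  rw [Ne, det_eq_zero_iff he hdk hdl]
  rintro ⟨u, hu, v, hv, h0, -, hvd, hdeg⟩
  have hz : u.comp (qp (p ^ e) k a) + v.comp (qp (p ^ e) l b) = 0 := by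
    by_contra hne
    have := natDegree_le_of_dvd (dvd_add (hf.trans (dvd_comp hq hu _))
      (hg.trans (dvd_comp hq hv _))) hne
    omega
  by_cases hv0 : v = 0
  · have hu0 : u ≠ 0 := by tauto
    rw [hv0, zero_comp, add_zero] at hz
    refine comp_ne_zero hq hu (qp_mem _ _ _) hu0 ?_ hz
    intro hf0
    have := natDegree_qp hq ha
    rw [hf0, natDegree_zero] at this
    have : 0 < (p ^ e) ^ k := by positivity
    omega
  · have h1 := hmin (-u) (Submodule.neg_mem _ hu) v hv hv0
      (by rw [neg_comp]; exact neg_eq_of_add_eq_zero_right hz)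
    have h2 : v.natDegree * (p ^ e) ^ d < (p ^ e) ^ (k - d) * (p ^ e) ^ d :=
      Nat.mul_lt_mul_of_pos_right hvd (by positivity)
    rw [← pow_add, Nat.sub_add_cancel hdk] at h2
    omega

end Frobenius

end QSubres

/-- Theorem: for `q`-polynomials `f, g` over the algebraic closure of `F_q` with nonzero
leading coefficients, and `0 ≤ μ ≤ min{k,l}`: `deg gcd(f,g) = q^μ` iff
`det R_{0,q}(f,g) = ⋯ = det R_{μ-1,q}(f,g) = 0` and `det R_{μ,q}(f,g) ≠ 0`. -/
theorem stmt_1 (p e q k l μ : ℕ) [Fact p.Prime] (he : 0 < e) (hq : q = p ^ e)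
    [DecidableEq (Polynomial (AlgebraicClosure (ZMod p)))]
    (a b : ℕ → AlgebraicClosure (ZMod p)) (ha : a k ≠ 0) (hb : b l ≠ 0)
    (hμ : μ ≤ min k l) :
    (EuclideanDomain.gcd
        (∑ i ∈ Finset.range (k + 1), C (a i) * X ^ q ^ i)
        (∑ i ∈ Finset.range (l + 1), C (b i) * X ^ q ^ i)).natDegree = q ^ μ ↔
      (∀ m, m < μ → (Rmat q k l m a b).det = 0) ∧ (Rmat q k l μ a b).det ≠ 0 := by
  subst hq
  have hq : 1 < p ^ e := Nat.one_lt_pow he.ne' (Fact.out : p.Prime).one_lt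
  change (EuclideanDomain.gcd (QSubres.qp (p ^ e) k a) (QSubres.qp (p ^ e) l b)).natDegree = _ ↔ _
  have hfd := QSubres.natDegree_qp hq ha
  have hgd := QSubres.natDegree_qp hq hb
  have hne : ∀ (f : (AlgebraicClosure (ZMod p))[X]) (n : ℕ), f.natDegree = (p ^ e) ^ n → f ≠ 0 := by
    rintro f n h rfl
    rw [natDegree_zero] at h
    have : 0 < (p ^ e) ^ n := by positivity
    omega
  have hf0 := hne _ _ hfd
  have hg0 := hne _ _ hgd
  obtain ⟨h, hh, hh0, hhf, hhg, hmax, ⟨u, hu, v, hv, hv0, huv, hdeg⟩, hmin⟩ :=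
    QSubres.exists_qgcd he (QSubres.qp_mem _ k a) (QSubres.qp_mem _ l b) hf0
  obtain ⟨d, hd⟩ := QSubres.natDegree_eq_pow hh hh0
  have hgcd : (EuclideanDomain.gcd (QSubres.qp (p ^ e) k a)
      (QSubres.qp (p ^ e) l b)).natDegree = (p ^ e) ^ d := by
    have h1 := hmax _ (EuclideanDomain.gcd_dvd_left _ _) (EuclideanDomain.gcd_dvd_right _ _)
    have h2 := EuclideanDomain.dvd_gcd hhf hhg
    rw [← hd]
    exact le_antisymm (natDegree_le_of_dvd h1 hh0)
      (natDegree_le_of_dvd h2 (ne_zero_of_dvd_ne_zero hh0 h1))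
  have hdk : d ≤ k := by
    have := natDegree_le_of_dvd hhf hf0
    rw [hd, hfd] at this
    exact (Nat.pow_le_pow_iff_right hq).1 this
  have hdl : d ≤ l := by
    have := natDegree_le_of_dvd hhg hg0
    rw [hd, hgd] at this
    exact (Nat.pow_le_pow_iff_right hq).1 this
  rw [hd, hfd] at hdeg
  rw [hd, hfd] at hmin
  have hlow : ∀ m < d, (Rmat (p ^ e) k l m a b).det = 0 := fun m hm =>
    QSubres.det_eq_zero_of_lt he ha hb hm hdk hdl hu hv hv0 huv hdeg
  have htop : (Rmat (p ^ e) k l d a b).det ≠ 0 :=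
    QSubres.det_ne_zero_of_eq he ha hdk hdl hd hhf hhg hmin
  rw [hgcd, Nat.pow_right_inj hq]
  constructor
  · rintro rfl
    exact ⟨hlow, htop⟩
  · rintro ⟨h1, h2⟩
    rcases lt_trichotomy d μ with hlt | heq | hgt
    · exact absurd (h1 d hlt) htop
    · exact heq
    · exact absurd (hlow μ hgt) h2
end

section
/- Let q be a prime power, let f(x) = Σ_{i=0}^{k} a_i x^{q^i} and g(x) = Σ_{i=0}^{l} b_i x^{q^i} be q-polynomials over the algebraic closure K of F_q with a_k b_l ≠ 0, let q^μ = deg gcd(f,g), and let 0 ≤ m ≤ μ. Consider q-polynomials c(x) = Σ_{i=0}^{k−m} c_i x^{q^i} and d(x) = Σ_{i=0}^{l−m} d_i x^{q^i} over K with prescribed leading coefficients c_{k−m} = a_k^{q^{l−m}} and d_{l−m} = b_l^{q^{k−m}}, and the remaining coefficients c_0,…,c_{k−m−1}, d_0,…,d_{l−m−1} regarded as unknowns. Then the set of tuples (c_0,…,c_{k−m−1}, d_0,…,d_{l−m−1}) ∈ K^{k+l−2m} for which d ∘ f − c ∘ g = 0 is a (μ−m)-dimensional affine K-subspace of K^{k+l−2m}.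 -/
/-!
Write `R` for the set of `q`-polynomials over `K`, a ring under addition and composition, and
call `n` the *order* of an element of degree `q ^ n`.  Composing on the right by a fixed
polynomial is `K`-linear, so everything reduces to counting dimensions.

* Right division with remainder in `R` (`exists_div`) shows that the left ideal `R f + R g` is
  generated by an element `h` of least degree (`exists_gcrd`).  Since `X ∣ u` for `u ∈ R`, this
  `h` generates the same ideal of `K[X]` as the ordinary gcd, so `h` has order `μ`.
* The map `(c, d) ↦ d ∘ f - c ∘ g` on pairs of order `< n₁`, `< n₂`, where
  `n₁ + l = n₂ + k = N`, takes values in the left multiples of `h` of order `< N`, a space of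
  dimension `N - μ` (`range_pairMap_le`, `finrank_range_mulRight`).  For `n₁ = k - μ + 1`,
  `n₂ = l - μ + 1` the source is larger than the target, so there is a relation
  `d₀ ∘ f = c₀ ∘ g` with `d₀ ≠ 0` of order at most `l - μ` (`exists_syzygy`).
* For `n₁ = k - m`, `n₂ = l - m` the map is onto (`range_pairMap`): write a left multiple of `h`
  as `d ∘ f - c ∘ g`, reduce `d` modulo `d₀`, and read off the bound on `c` from degrees.
  Hence its kernel has dimension `(k - m) + (l - m) - (k + l - m - μ) = μ - m`.
* The prescribed leading terms contribute a left multiple of `h` whose coefficient at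
  `q ^ (k + l - m)` cancels; by surjectivity the inhomogeneous system is solvable, and its
  solution set is a translate of the kernel.
-/

open Polynomial

namespace QPoly

variable {K : Type*} [Field K]

/-- The `K`-space of `q`-polynomials, as a subspace of `K[X]`. -/
noncomputable def Q (K : Type*) [Field K] (q : ℕ) : Submodule K K[X] :=
  Submodule.span K (Set.range fun i : ℕ => (X : K[X]) ^ q ^ i)

/-- The `q`-polynomial `∑_{i < n} v_i X^{q^i}` with coefficient vector `v`. -/
noncomputable def P (K : Type*) [Field K] (q n : ℕ) : (Fin n → K) →ₗ[K] K[X] where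
  toFun v := ∑ i : Fin n, C (v i) * X ^ q ^ i.val
  map_add' u v := by simp [add_mul, Finset.sum_add_distrib]
  map_smul' c v := by simp [Finset.smul_sum, smul_eq_C_mul, mul_assoc]

/-- Composition `u ↦ u ∘ h` with a fixed polynomial on the right. -/
noncomputable def compR (h : K[X]) : K[X] →ₗ[K] K[X] := (aeval h).toLinearMap

@[simp] lemma compR_apply (h u : K[X]) : compR h u = u.comp h := by
  simp [compR, comp_eq_aeval]

lemma P_apply (q n : ℕ) (v : Fin n → K) :
    P K q n v = ∑ i : Fin n, C (v i) * X ^ q ^ i.val := rfl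

lemma X_pow_mem (q i : ℕ) : (X : K[X]) ^ q ^ i ∈ Q K q := Submodule.subset_span ⟨i, rfl⟩

lemma C_mul_mem {q : ℕ} {u : K[X]} (c : K) (hu : u ∈ Q K q) : C c * u ∈ Q K q := by
  rw [← smul_eq_C_mul]; exact Submodule.smul_mem _ _ hu

lemma P_mem (q n : ℕ) (v : Fin n → K) : P K q n v ∈ Q K q := by
  rw [P_apply]
  exact Submodule.sum_mem _ fun i _ => C_mul_mem _ (X_pow_mem q i)

lemma coeff_eq_zero {q : ℕ} {u : K[X]} (hu : u ∈ Q K q) {j : ℕ} (hj : ∀ i, j ≠ q ^ i) :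
    u.coeff j = 0 := by
  induction hu using Submodule.span_induction with
  | mem x hx =>
    obtain ⟨i, rfl⟩ := hx
    simp [coeff_X_pow, hj i]
  | zero => simp
  | add x y _ _ hx hy => simp [hx, hy]
  | smul c x _ hx => simp [hx]

lemma natDegree_eq {q : ℕ} {u : K[X]} (hu : u ∈ Q K q) (h0 : u ≠ 0) :
    ∃ n, u.natDegree = q ^ n := by
  by_contra! h
  exact h0 (leadingCoeff_eq_zero.1 (coeff_eq_zero hu h))

lemma X_dvd {q : ℕ} (hq : 1 < q) {u : K[X]} (hu : u ∈ Q K q) : X ∣ u := by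
  rw [X_dvd_iff]
  exact coeff_eq_zero hu fun i => (pow_pos (by omega) i).ne

lemma dvd_comp {q : ℕ} (hq : 1 < q) {u : K[X]} (hu : u ∈ Q K q) (h : K[X]) : h ∣ u.comp h := by
  obtain ⟨w, rfl⟩ := X_dvd hq hu
  simp

lemma coeff_P {q : ℕ} (hq : 1 < q) {n : ℕ} (v : Fin n → K) (j : ℕ) :
    (P K q n v).coeff (q ^ j) = if h : j < n then v ⟨j, h⟩ else 0 := by
  simp only [P_apply, finsetSum_coeff, coeff_C_mul, coeff_X_pow,
    (Nat.pow_right_injective hq).eq_iff]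
  split_ifs with h
  · rw [Finset.sum_eq_single ⟨j, h⟩]
    · simp
    · intro i _ hi
      rw [if_neg (fun h' => hi (Fin.ext h'.symm)), mul_zero]
    · simp
  · refine Finset.sum_eq_zero fun i _ => ?_
    rw [if_neg (by have := i.2; omega), mul_zero]

lemma P_injective {q : ℕ} (hq : 1 < q) (n : ℕ) : Function.Injective (P K q n) := by
  intro u v h
  ext i
  have := congrArg (fun w => w.coeff (q ^ i.val)) h
  simpa [coeff_P hq] using this

lemma natDegree_P_lt {q : ℕ} (hq : 1 < q) (n : ℕ) (v : Fin n → K) :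
    (P K q n v).natDegree < q ^ n := by
  by_cases h0 : P K q n v = 0
  · rw [h0]; simpa using pow_pos (by omega) n
  obtain ⟨j, hj⟩ := natDegree_eq (P_mem q n v) h0
  have h1 : (P K q n v).coeff (q ^ j) ≠ 0 := by
    rw [← hj]; simpa using h0
  rw [hj]
  apply Nat.pow_lt_pow_right hq
  by_contra h
  exact h1 (by rw [coeff_P hq, dif_neg h])

/-- A bound on `natDegree` suffices even for `n = 0`, as `q`-polynomials have no constant
term. -/
lemma mem_range_P {q : ℕ} (hq : 1 < q) {n : ℕ} {u : K[X]} :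
    u ∈ LinearMap.range (P K q n) ↔ u ∈ Q K q ∧ u.natDegree < q ^ n := by
  constructor
  · rintro ⟨v, rfl⟩
    exact ⟨P_mem q n v, natDegree_P_lt hq n v⟩
  · rintro ⟨hu, hd⟩
    refine ⟨fun i => u.coeff (q ^ i.val), ?_⟩
    ext j
    by_cases hj : ∃ i, j = q ^ i
    · obtain ⟨i, rfl⟩ := hj
      rw [coeff_P hq]
      split_ifs with h
      · rfl
      · refine (coeff_eq_zero_of_natDegree_lt (hd.trans_le ?_)).symm
        exact Nat.pow_le_pow_right (by omega) (by omega)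
    · push Not at hj
      rw [coeff_eq_zero hu hj, coeff_eq_zero (P_mem q n _) hj]

/-! ### Composition of `q`-polynomials -/

section Comp

variable {p e q : ℕ} [Fact p.Prime] [CharP K p]

lemma add_pow_q (hq : q = p ^ e) (i : ℕ) (u v : K[X]) :
    (u + v) ^ q ^ i = u ^ q ^ i + v ^ q ^ i := by
  rw [hq, ← pow_mul]
  exact add_pow_char_pow u v p (e * i)

lemma pow_mem (hq : q = p ^ e) (hq1 : 1 < q) (i : ℕ) {u : K[X]} (hu : u ∈ Q K q) :
    u ^ q ^ i ∈ Q K q := by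
  induction hu using Submodule.span_induction with
  | mem x hx =>
    obtain ⟨j, rfl⟩ := hx
    simp only [← pow_mul, ← pow_add]
    exact X_pow_mem _ _
  | zero => rw [zero_pow (pow_pos (by omega) i).ne']; exact zero_mem _
  | add x y _ _ hx hy => rw [add_pow_q hq]; exact add_mem hx hy
  | smul c x _ hx => rw [_root_.smul_pow]; exact Submodule.smul_mem _ _ hx

lemma comp_mem (hq : q = p ^ e) (hq1 : 1 < q) {u f : K[X]} (hu : u ∈ Q K q) (hf : f ∈ Q K q) :
    u.comp f ∈ Q K q := by
  induction hu using Submodule.span_induction with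
  | mem x hx =>
    obtain ⟨j, rfl⟩ := hx
    simpa using pow_mem hq hq1 j hf
  | zero => simp
  | add x y _ _ hx hy => rw [add_comp]; exact add_mem hx hy
  | smul c x _ hx => rw [smul_comp]; exact Submodule.smul_mem _ _ hx

lemma comp_add' (hq : q = p ^ e) {u : K[X]} (hu : u ∈ Q K q) (f g : K[X]) :
    u.comp (f + g) = u.comp f + u.comp g := by
  induction hu using Submodule.span_induction with
  | mem x hx =>
    obtain ⟨j, rfl⟩ := hx
    simpa using add_pow_q hq j f g
  | zero => simp
  | add x y _ _ hx hy => rw [add_comp, add_comp, add_comp, hx, hy]; ring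
  | smul c x _ hx => rw [smul_comp, smul_comp, smul_comp, hx, smul_add]

/-- Right division with remainder for composition of `q`-polynomials. -/
lemma exists_div (hq : q = p ^ e) (hq1 : 1 < q) {f : K[X]} (hf : f ∈ Q K q) (h0 : f ≠ 0) :
    ∀ (n : ℕ) {w : K[X]}, w ∈ Q K q → w.natDegree < n →
      ∃ u ∈ Q K q, w - u.comp f = 0 ∨ (w - u.comp f).natDegree < f.natDegree := by
  intro n
  induction n with
  | zero => intro w _ h; omega
  | succ n ih =>
    intro w hw hn
    by_cases hlt : w.natDegree < f.natDegree
    · exact ⟨0, zero_mem _, Or.inr (by simpa using hlt)⟩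
    by_cases hw0 : w = 0
    · exact ⟨0, zero_mem _, Or.inl (by simp [hw0])⟩
    obtain ⟨k, hk⟩ := natDegree_eq hf h0
    obtain ⟨j, hj⟩ := natDegree_eq hw hw0
    have hkj : k ≤ j := by
      rw [hk, hj, not_lt] at hlt
      exact (Nat.pow_le_pow_iff_right hq1).1 hlt
    -- `c X^{q^{j-k}}` composed with `f` has the leading term of `w`
    set c : K := w.leadingCoeff / f.leadingCoeff ^ q ^ (j - k) with hc
    have hfl : f.leadingCoeff ≠ 0 := by simpa using h0
    have hwl : w.leadingCoeff ≠ 0 := by simpa using hw0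
    have hc0 : c ≠ 0 := div_ne_zero hwl (pow_ne_zero _ hfl)
    have ht : C c * X ^ q ^ (j - k) ∈ Q K q := C_mul_mem _ (X_pow_mem _ _)
    have hcomp : (C c * X ^ q ^ (j - k) : K[X]).comp f = C c * f ^ q ^ (j - k) := by simp
    have hdeg : (C c * f ^ q ^ (j - k)).natDegree = w.natDegree := by
      rw [natDegree_C_mul hc0, natDegree_pow, hk, hj, ← pow_add]
      congr 1; omega
    have hne : C c * f ^ q ^ (j - k) ≠ 0 := mul_ne_zero (by simpa using hc0) (pow_ne_zero _ h0)
    have hlead : w.leadingCoeff = (C c * f ^ q ^ (j - k)).leadingCoeff := by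
      rw [leadingCoeff_mul, leadingCoeff_C, leadingCoeff_pow, hc,
        div_mul_cancel₀ _ (pow_ne_zero _ hfl)]
    have hw' : w - C c * f ^ q ^ (j - k) ∈ Q K q := by
      rw [← hcomp]; exact sub_mem hw (comp_mem hq hq1 ht hf)
    have key : ∃ u ∈ Q K q, (w - C c * f ^ q ^ (j - k)) - u.comp f = 0 ∨
        ((w - C c * f ^ q ^ (j - k)) - u.comp f).natDegree < f.natDegree := by
      by_cases hz : w - C c * f ^ q ^ (j - k) = 0
      · exact ⟨0, zero_mem _, Or.inl (by simp [hz])⟩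
      · refine ih hw' ?_
        have := natDegree_lt_natDegree hz (degree_sub_lt_left
          (by rw [degree_eq_natDegree hw0, degree_eq_natDegree hne, hdeg]) hw0 hlead)
        omega
    obtain ⟨u, hu, h⟩ := key
    refine ⟨C c * X ^ q ^ (j - k) + u, add_mem ht hu, ?_⟩
    rw [add_comp, hcomp, ← sub_sub]
    exact h

/-- The left ideal generated by `f` and `g` is principal, with a generator that is also an
ordinary gcd of `f` and `g` in `K[X]`. -/
lemma exists_gcrd (hq : q = p ^ e) (hq1 : 1 < q) [DecidableEq K[X]] {f g : K[X]}
    (hf : f ∈ Q K q) (hg : g ∈ Q K q) (hf0 : f ≠ 0) :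
    ∃ h ∈ Q K q, h ≠ 0 ∧ h.natDegree = (EuclideanDomain.gcd f g).natDegree ∧
      (∃ s ∈ Q K q, ∃ t ∈ Q K q, h = s.comp f + t.comp g) ∧
      (∃ f' ∈ Q K q, f = f'.comp h) ∧ (∃ g' ∈ Q K q, g = g'.comp h) := by
  classical
  let J : Submodule K K[X] :=
    (Q K q).map (compR f) ⊔ (Q K q).map (compR g)
  have memJ : ∀ w, w ∈ J ↔ ∃ s ∈ Q K q, ∃ t ∈ Q K q, w = s.comp f + t.comp g := by
    intro w
    simp only [J, Submodule.mem_sup, Submodule.mem_map, compR_apply]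
    constructor
    · rintro ⟨_, ⟨s, hs, rfl⟩, _, ⟨t, ht, rfl⟩, rfl⟩
      exact ⟨s, hs, t, ht, rfl⟩
    · rintro ⟨s, hs, t, ht, rfl⟩
      exact ⟨_, ⟨s, hs, rfl⟩, _, ⟨t, ht, rfl⟩, rfl⟩
  have hX : (X : K[X]) ∈ Q K q := by simpa using X_pow_mem (K := K) q 0
  have hfJ : f ∈ J := (memJ f).2 ⟨X, hX, 0, zero_mem _, by simp⟩
  have hgJ : g ∈ J := (memJ g).2 ⟨0, zero_mem _, X, hX, by simp⟩
  have hJQ : ∀ w ∈ J, w ∈ Q K q := by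
    intro w hw
    obtain ⟨s, hs, t, ht, rfl⟩ := (memJ w).1 hw
    exact add_mem (comp_mem hq hq1 hs hf) (comp_mem hq hq1 ht hg)
  have hJcomp : ∀ u ∈ Q K q, ∀ w ∈ J, u.comp w ∈ J := by
    intro u hu w hw
    obtain ⟨s, hs, t, ht, rfl⟩ := (memJ w).1 hw
    refine (memJ _).2 ⟨u.comp s, comp_mem hq hq1 hu hs, u.comp t, comp_mem hq hq1 hu ht, ?_⟩
    rw [comp_add' hq hu, comp_assoc, comp_assoc]
  have hex : ∃ n, ∃ w ∈ J, w ≠ 0 ∧ w.natDegree = n := ⟨_, f, hfJ, hf0, rfl⟩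
  obtain ⟨h, hhJ, hh0, hhn⟩ := Nat.find_spec hex
  have hmin : ∀ w ∈ J, ∃ u ∈ Q K q, w = u.comp h := by
    intro w hw
    obtain ⟨u, hu, h1⟩ := exists_div hq hq1 (hJQ h hhJ) hh0 _ (hJQ w hw) (Nat.lt_succ_self _)
    refine ⟨u, hu, ?_⟩
    by_contra hne
    have hne' : w - u.comp h ≠ 0 := sub_ne_zero.2 hne
    have hlt := h1.resolve_left hne'
    rw [hhn] at hlt
    exact Nat.find_min hex hlt ⟨_, sub_mem hw (hJcomp u hu h hhJ), hne', rfl⟩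
  refine ⟨h, hJQ h hhJ, hh0, ?_, (memJ h).1 hhJ, hmin f hfJ, hmin g hgJ⟩
  obtain ⟨s, hs, t, ht, hst⟩ := (memJ h).1 hhJ
  obtain ⟨f', hf', hff⟩ := hmin f hfJ
  obtain ⟨g', hg', hgg⟩ := hmin g hgJ
  have h1 : h ∣ EuclideanDomain.gcd f g :=
    EuclideanDomain.dvd_gcd (hff ▸ dvd_comp hq1 hf' h) (hgg ▸ dvd_comp hq1 hg' h)
  have h2 : EuclideanDomain.gcd f g ∣ h := by
    rw [hst]
    exact dvd_add ((EuclideanDomain.gcd_dvd_left f g).trans (dvd_comp hq1 hs f))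
      ((EuclideanDomain.gcd_dvd_right f g).trans (dvd_comp hq1 ht g))
  exact natDegree_eq_of_degree_eq (degree_eq_degree_of_associated (associated_of_dvd_dvd h1 h2))

end Comp

/-! ### The linear map `(c, d) ↦ d ∘ f - c ∘ g` -/

/-- The map `(c, d) ↦ d ∘ f - c ∘ g` on coefficient vectors, `c` having `n₁` and `d` having `n₂`
coefficients. -/
noncomputable def pairMap (q : ℕ) (f g : K[X]) (n₁ n₂ : ℕ) :
    (Fin n₁ ⊕ Fin n₂ → K) →ₗ[K] K[X] :=
  compR f ∘ₗ P K q n₂ ∘ₗ LinearMap.funLeft K K Sum.inr -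
    compR g ∘ₗ P K q n₁ ∘ₗ LinearMap.funLeft K K Sum.inl

lemma pairMap_apply (q : ℕ) (f g : K[X]) (n₁ n₂ : ℕ) (v : Fin n₁ ⊕ Fin n₂ → K) :
    pairMap q f g n₁ n₂ v =
      (P K q n₂ fun i => v (Sum.inr i)).comp f - (P K q n₁ fun i => v (Sum.inl i)).comp g := by
  simp [pairMap, LinearMap.funLeft, Function.comp_def]

/-- The map `u ↦ u ∘ h` on coefficient vectors of length `n`; its range consists of the left
multiples `u ∘ h` with `u` a `q`-polynomial of degree `< q ^ n`. -/
noncomputable def mulRight (q : ℕ) (h : K[X]) (n : ℕ) : (Fin n → K) →ₗ[K] K[X] :=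
  compR h ∘ₗ P K q n

lemma comp_eq_zero_left {q μ : ℕ} (hq : 1 < q) {u h : K[X]} (hμ : h.natDegree = q ^ μ)
    (hu : u.comp h = 0) : u = 0 := by
  rcases comp_eq_zero_iff.1 hu with h1 | h1
  · exact h1
  · have := congrArg natDegree h1.2
    rw [hμ, natDegree_C] at this
    exact absurd this (pow_pos (by omega) μ).ne'

lemma finrank_range_mulRight {q μ : ℕ} (hq : 1 < q) {h : K[X]} (hμ : h.natDegree = q ^ μ)
    (n : ℕ) : Module.finrank K (LinearMap.range (mulRight q h n)) = n := by
  rw [LinearMap.finrank_range_of_inj]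
  · simp
  · refine (injective_iff_map_eq_zero _).2 fun v hv => ?_
    refine (injective_iff_map_eq_zero _).1 (P_injective hq n) v ?_
    exact comp_eq_zero_left hq hμ (by simpa [mulRight] using hv)

/-- A left multiple of `h` of degree `< q ^ N` has its left factor of degree `< q ^ (N - μ)`. -/
lemma mem_range_mulRight {q μ N : ℕ} (hq : 1 < q) {h u : K[X]} (hμ : h.natDegree = q ^ μ)
    (hN : μ ≤ N) (hu : u ∈ Q K q) (hd : (u.comp h).natDegree < q ^ N) :
    u.comp h ∈ LinearMap.range (mulRight q h (N - μ)) := by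
  have h1 : u.natDegree < q ^ (N - μ) := by
    rw [natDegree_comp, hμ, ← Nat.sub_add_cancel hN, pow_add] at hd
    exact lt_of_mul_lt_mul_right hd (Nat.zero_le _)
  obtain ⟨v, rfl⟩ := (mem_range_P hq).2 ⟨hu, h1⟩
  exact ⟨v, by simp [mulRight]⟩

section Pair

variable {p e q k l μ : ℕ} [Fact p.Prime] [CharP K p] {f g h f' g' : K[X]}

lemma range_pairMap_le (hq : q = p ^ e) (hq1 : 1 < q)
    (hfd : f.natDegree = q ^ k) (hgd : g.natDegree = q ^ l) (hμ : h.natDegree = q ^ μ)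
    (hf' : f' ∈ Q K q) (hff : f = f'.comp h) (hg' : g' ∈ Q K q) (hgg : g = g'.comp h)
    {n₁ n₂ N : ℕ} (h1 : n₁ + l = N) (h2 : n₂ + k = N) (hN : μ ≤ N) :
    LinearMap.range (pairMap q f g n₁ n₂) ≤ LinearMap.range (mulRight q h (N - μ)) := by
  rintro _ ⟨v, rfl⟩
  rw [pairMap_apply]
  set d := P K q n₂ fun i => v (Sum.inr i)
  set c := P K q n₁ fun i => v (Sum.inl i)
  have hd : d.natDegree < q ^ n₂ := natDegree_P_lt hq1 _ _
  have hc : c.natDegree < q ^ n₁ := natDegree_P_lt hq1 _ _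
  have hqpos : ∀ n, 0 < q ^ n := fun n => pow_pos (by omega) n
  have hdeg : (d.comp f - c.comp g).natDegree < q ^ N := by
    refine (natDegree_sub_le _ _).trans_lt (max_lt ?_ ?_)
    · rw [natDegree_comp, hfd, ← h2, pow_add]
      exact Nat.mul_lt_mul_of_pos_right hd (hqpos _)
    · rw [natDegree_comp, hgd, ← h1, pow_add]
      exact Nat.mul_lt_mul_of_pos_right hc (hqpos _)
  have heq : d.comp f - c.comp g = (d.comp f' - c.comp g').comp h := by
    rw [sub_comp, comp_assoc, comp_assoc, ← hff, ← hgg]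
  rw [heq] at hdeg ⊢
  exact mem_range_mulRight hq1 hμ hN
    (sub_mem (comp_mem hq hq1 (P_mem _ _ _) hf') (comp_mem hq hq1 (P_mem _ _ _) hg')) hdeg

/-- A common left multiple of `f` and `g` of the expected order `k + l - μ` or less. -/
lemma exists_syzygy (hq : q = p ^ e) (hq1 : 1 < q)
    (hfd : f.natDegree = q ^ k) (hgd : g.natDegree = q ^ l) (hμ : h.natDegree = q ^ μ)
    (hf' : f' ∈ Q K q) (hff : f = f'.comp h) (hg' : g' ∈ Q K q) (hgg : g = g'.comp h)
    (hk : μ ≤ k) (hl : μ ≤ l) :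
    ∃ d ∈ Q K q, ∃ c ∈ Q K q, d ≠ 0 ∧ d.natDegree ≤ q ^ (l - μ) ∧ d.comp f = c.comp g := by
  have hle := range_pairMap_le hq hq1 hfd hgd hμ hf' hff hg' hgg
    (n₁ := k - μ + 1) (n₂ := l - μ + 1) (N := k + l - μ + 1) (by omega) (by omega) (by omega)
  have hfin := Submodule.finrank_mono hle
  rw [finrank_range_mulRight hq1 hμ] at hfin
  have hrn := LinearMap.finrank_range_add_finrank_ker (pairMap q f g (k - μ + 1) (l - μ + 1))
  simp only [Module.finrank_fintype_fun_eq_card, Fintype.card_sum, Fintype.card_fin] at hrn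
  have hker : LinearMap.ker (pairMap q f g (k - μ + 1) (l - μ + 1)) ≠ ⊥ := by
    intro h0
    rw [h0, finrank_bot] at hrn
    omega
  obtain ⟨v, hv, hv0⟩ := Submodule.exists_mem_ne_zero_of_ne_bot hker
  rw [LinearMap.mem_ker, pairMap_apply, sub_eq_zero] at hv
  refine ⟨_, P_mem _ _ _, _, P_mem _ _ _, ?_, ?_, hv⟩
  · intro hd
    rw [hd, zero_comp] at hv
    have hc := comp_eq_zero_left hq1 hgd hv.symm
    have hd' := (injective_iff_map_eq_zero _).1 (P_injective hq1 _) _ hd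
    have hc' := (injective_iff_map_eq_zero _).1 (P_injective hq1 _) _ hc
    refine hv0 (funext fun i => ?_)
    rcases i with i | i
    · exact congrFun hc' i
    · exact congrFun hd' i
  · by_cases hz : (P K q (l - μ + 1) fun i => v (Sum.inr i)) = 0
    · rw [hz]; simp
    obtain ⟨j, hj⟩ := natDegree_eq (P_mem _ _ _) hz
    have hlt := natDegree_P_lt hq1 (l - μ + 1) fun i => v (Sum.inr i)
    rw [hj] at hlt ⊢
    have := (Nat.pow_lt_pow_iff_right hq1).1 hlt
    exact Nat.pow_le_pow_right (by omega) (by omega)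

/-- For `m ≤ μ` the pairs of orders `< k - m`, `< l - m` produce every left multiple of `h` of
order `< k + l - m`. -/
lemma range_pairMap (hq : q = p ^ e) (hq1 : 1 < q)
    (hfd : f.natDegree = q ^ k) (hgd : g.natDegree = q ^ l) (hμ : h.natDegree = q ^ μ)
    (hf' : f' ∈ Q K q) (hff : f = f'.comp h) (hg' : g' ∈ Q K q) (hgg : g = g'.comp h)
    (hst : ∃ s ∈ Q K q, ∃ t ∈ Q K q, h = s.comp f + t.comp g)
    (hk : μ ≤ k) (hl : μ ≤ l) {m : ℕ} (hm : m ≤ μ) :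
    LinearMap.range (pairMap q f g (k - m) (l - m)) =
      LinearMap.range (mulRight q h (k + l - m - μ)) := by
  refine le_antisymm (range_pairMap_le hq hq1 hfd hgd hμ hf' hff hg' hgg
    (by omega) (by omega) (by omega)) ?_
  rintro _ ⟨x, rfl⟩
  have hqpos : ∀ n, 0 < q ^ n := fun n => pow_pos (by omega) n
  obtain ⟨s, hs, t, ht, hst⟩ := hst
  obtain ⟨d₀, hd₀, c₀, hc₀, hne, hdeg, hsyz⟩ :=
    exists_syzygy hq hq1 hfd hgd hμ hf' hff hg' hgg hk hl
  set u := P K q (k + l - m - μ) x with hu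
  have huQ : u ∈ Q K q := P_mem _ _ _
  have hval : mulRight q h (k + l - m - μ) x = u.comp h := by simp [mulRight, hu]
  have hud : (u.comp h).natDegree < q ^ (k + l - m) := by
    rw [natDegree_comp, hμ, show k + l - m = (k + l - m - μ) + μ by omega, pow_add]
    exact Nat.mul_lt_mul_of_pos_right (by
      simpa using natDegree_P_lt hq1 (k + l - m - μ) x) (hqpos _)
  -- reduce the coefficient `u ∘ s` of `f` modulo `d₀`
  obtain ⟨w, hw, hr⟩ := exists_div hq hq1 hd₀ hne _ (comp_mem hq hq1 huQ hs) (Nat.lt_succ_self _)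
  set r := u.comp s - w.comp d₀ with hrdef
  have hrQ : r ∈ Q K q := sub_mem (comp_mem hq hq1 huQ hs) (comp_mem hq hq1 hw hd₀)
  have hrd : r.natDegree < q ^ (l - m) := by
    rcases hr with hr | hr
    · rw [hr]; simpa using hqpos _
    · exact (hr.trans_le hdeg).trans_le (Nat.pow_le_pow_right (by omega) (by omega))
  set c := -(w.comp c₀ + u.comp t) with hcdef
  have hcQ : c ∈ Q K q := neg_mem (add_mem (comp_mem hq hq1 hw hc₀) (comp_mem hq hq1 huQ ht))
  have heq : r.comp f - c.comp g = u.comp h := by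
    have e1 : u.comp h = (u.comp s).comp f + (u.comp t).comp g := by
      rw [comp_assoc, comp_assoc, ← comp_add' hq huQ, ← hst]
    have e2 : (w.comp d₀).comp f = (w.comp c₀).comp g := by
      rw [comp_assoc, comp_assoc, hsyz]
    rw [e1, hrdef, hcdef, sub_comp, neg_comp, add_comp, e2]
    ring
  have hcd : c.natDegree < q ^ (k - m) := by
    have h1 : (c.comp g).natDegree < q ^ (k + l - m) := by
      rw [show c.comp g = r.comp f - u.comp h by rw [← heq]; ring]
      refine (natDegree_sub_le _ _).trans_lt (max_lt ?_ hud)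
      rw [natDegree_comp, hfd, show k + l - m = (l - m) + k by omega, pow_add]
      exact Nat.mul_lt_mul_of_pos_right hrd (hqpos _)
    rw [natDegree_comp, hgd, show k + l - m = (k - m) + l by omega, pow_add] at h1
    exact lt_of_mul_lt_mul_right h1 (Nat.zero_le _)
  obtain ⟨vr, hvr⟩ := (mem_range_P hq1).2 ⟨hrQ, hrd⟩
  obtain ⟨vc, hvc⟩ := (mem_range_P hq1).2 ⟨hcQ, hcd⟩
  refine ⟨Sum.elim vc vr, ?_⟩
  rw [pairMap_apply, hval, ← heq]
  simp only [Sum.elim_inl, Sum.elim_inr]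
  rw [hvr, hvc]

end Pair

lemma sum_range_eq_P (q n : ℕ) (a : ℕ → K) :
    ∑ i ∈ Finset.range n, C (a i) * X ^ q ^ i = P K q n fun i => a i := by
  rw [P_apply, Finset.sum_range fun i => C (a i) * X ^ q ^ i]

lemma natDegree_sum {q : ℕ} (hq : 1 < q) (k : ℕ) (a : ℕ → K) (ha : a k ≠ 0) :
    (∑ i ∈ Finset.range (k + 1), C (a i) * X ^ q ^ i).natDegree = q ^ k ∧
    (∑ i ∈ Finset.range (k + 1), C (a i) * X ^ q ^ i).leadingCoeff = a k := by
  have hcoeff : (∑ i ∈ Finset.range (k + 1), C (a i) * X ^ q ^ i).coeff (q ^ k) = a k := by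
    rw [sum_range_eq_P, coeff_P hq]; simp
  have hdeg : (∑ i ∈ Finset.range (k + 1), C (a i) * X ^ q ^ i).natDegree = q ^ k := by
    refine le_antisymm ?_ (le_natDegree_of_ne_zero (by rw [hcoeff]; exact ha))
    refine natDegree_sum_le_of_forall_le _ _ fun i hi => (natDegree_C_mul_X_pow_le _ _).trans ?_
    exact Nat.pow_le_pow_right (by omega) (by simpa [Nat.lt_succ_iff] using hi)
  exact ⟨hdeg, by rw [leadingCoeff, hdeg, hcoeff]⟩

end QPoly

open QPoly

/-- Proposition: let `q^μ = deg gcd(f,g)` and `m ≤ μ`.  Among the `q`-polynomials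
`c(x) = ∑_{i=0}^{k-m} c_i x^{q^i}` and `d(x) = ∑_{i=0}^{l-m} d_i x^{q^i}` with prescribed
leading coefficients `c_{k-m} = a_k^{q^{l-m}}`, `d_{l-m} = b_l^{q^{k-m}}`, the tuples of
remaining coefficients `(c_0,…,c_{k-m-1}, d_0,…,d_{l-m-1})` (encoded as elements of
`K^{(k-m)} × K^{(l-m)} ≃ K^{k+l-2m}`, first component the `c_i`, second the `d_i`)
satisfying `d ∘ f - c ∘ g = 0` form a `(μ-m)`-dimensional affine `K`-subspace. -/
theorem stmt_2 (p e q k l m μ : ℕ) [Fact p.Prime] (he : 0 < e) (hq : q = p ^ e)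
    [DecidableEq (Polynomial (AlgebraicClosure (ZMod p)))]
    (a b : ℕ → AlgebraicClosure (ZMod p)) (ha : a k ≠ 0) (hb : b l ≠ 0)
    (hμ : (EuclideanDomain.gcd
        (∑ i ∈ Finset.range (k + 1), C (a i) * X ^ q ^ i)
        (∑ i ∈ Finset.range (l + 1), C (b i) * X ^ q ^ i)).natDegree = q ^ μ)
    (hm : m ≤ μ) :
    ∃ S : AffineSubspace (AlgebraicClosure (ZMod p))
        (Fin (k - m) ⊕ Fin (l - m) → AlgebraicClosure (ZMod p)),
      (S : Set (Fin (k - m) ⊕ Fin (l - m) → AlgebraicClosure (ZMod p))) =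
        {v | ((∑ i : Fin (l - m), C (v (Sum.inr i)) * X ^ q ^ i.val)
                + C (b l ^ q ^ (k - m)) * X ^ q ^ (l - m)).comp
              (∑ i ∈ Finset.range (k + 1), C (a i) * X ^ q ^ i)
            - ((∑ i : Fin (k - m), C (v (Sum.inl i)) * X ^ q ^ i.val)
                + C (a k ^ q ^ (l - m)) * X ^ q ^ (k - m)).comp
              (∑ i ∈ Finset.range (l + 1), C (b i) * X ^ q ^ i) = 0} ∧
      (S : Set (Fin (k - m) ⊕ Fin (l - m) → AlgebraicClosure (ZMod p))).Nonempty ∧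
      Module.finrank (AlgebraicClosure (ZMod p)) S.direction = μ - m := by
  have hp : p.Prime := Fact.out
  have hq1 : 1 < q := by rw [hq]; exact Nat.one_lt_pow he.ne' hp.one_lt
  have hqpos : ∀ n, 0 < q ^ n := fun n => pow_pos (by omega) n
  obtain ⟨hfd, hfl⟩ := natDegree_sum hq1 k a ha
  obtain ⟨hgd, hgl⟩ := natDegree_sum hq1 l b hb
  have hfQ := P_mem q (k + 1) fun i => a i
  have hgQ := P_mem q (l + 1) fun i => b i
  rw [← sum_range_eq_P] at hfQ hgQ
  set f := ∑ i ∈ Finset.range (k + 1), C (a i) * X ^ q ^ i with hf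
  set g := ∑ i ∈ Finset.range (l + 1), C (b i) * X ^ q ^ i with hg
  have hf0 : f ≠ 0 := by
    intro h0; rw [h0, natDegree_zero] at hfd; exact (hqpos k).ne hfd
  have hg0 : g ≠ 0 := by
    intro h0; rw [h0, natDegree_zero] at hgd; exact (hqpos l).ne hgd
  obtain ⟨h, hhQ, hh0, hhd, hst, ⟨f', hf', hff⟩, ⟨g', hg', hgg⟩⟩ :=
    exists_gcrd hq hq1 hfQ hgQ hf0
  rw [hμ] at hhd
  have hk : μ ≤ k := by
    have := natDegree_le_of_dvd (hff ▸ dvd_comp hq1 hf' h) hf0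
    rw [hhd, hfd] at this
    exact (Nat.pow_le_pow_iff_right hq1).1 this
  have hl : μ ≤ l := by
    have := natDegree_le_of_dvd (hgg ▸ dvd_comp hq1 hg' h) hg0
    rw [hhd, hgd] at this
    exact (Nat.pow_le_pow_iff_right hq1).1 this
  have hrange := range_pairMap hq hq1 hfd hgd hhd hf' hff hg' hgg hst hk hl hm
  -- `D ∘ f - E ∘ g` is the contribution of the prescribed leading terms
  set D : Polynomial (AlgebraicClosure (ZMod p)) :=
    C (b l ^ q ^ (k - m)) * X ^ q ^ (l - m) with hD
  set E : Polynomial (AlgebraicClosure (ZMod p)) :=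
    C (a k ^ q ^ (l - m)) * X ^ q ^ (k - m) with hE
  have hDQ : D ∈ Q (AlgebraicClosure (ZMod p)) q := C_mul_mem _ (X_pow_mem _ _)
  have hEQ : E ∈ Q (AlgebraicClosure (ZMod p)) q := C_mul_mem _ (X_pow_mem _ _)
  have hbl : b l ^ q ^ (k - m) ≠ 0 := pow_ne_zero _ hb
  have hak : a k ^ q ^ (l - m) ≠ 0 := pow_ne_zero _ ha
  have hDf : D.comp f = C (b l ^ q ^ (k - m)) * f ^ q ^ (l - m) := by simp [hD]
  have hEg : E.comp g = C (a k ^ q ^ (l - m)) * g ^ q ^ (k - m) := by simp [hE]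
  have hDfd : (D.comp f).natDegree = q ^ (k + l - m) := by
    rw [hDf, natDegree_C_mul hbl, natDegree_pow, hfd, ← pow_add]; congr 1; omega
  have hEgd : (E.comp g).natDegree = q ^ (k + l - m) := by
    rw [hEg, natDegree_C_mul hak, natDegree_pow, hgd, ← pow_add]; congr 1; omega
  have hDf0 : D.comp f ≠ 0 := by
    intro h0; rw [h0, natDegree_zero] at hDfd; exact (hqpos _).ne hDfd
  have hEg0 : E.comp g ≠ 0 := by
    intro h0; rw [h0, natDegree_zero] at hEgd; exact (hqpos _).ne hEgd
  have hlead : (D.comp f).leadingCoeff = (E.comp g).leadingCoeff := by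
    rw [hDf, hEg]
    simp only [leadingCoeff_mul, leadingCoeff_C, leadingCoeff_pow, hfl, hgl]
    ring
  have hw0d : (D.comp f - E.comp g).natDegree < q ^ (k + l - m) := by
    by_cases hz : D.comp f - E.comp g = 0
    · rw [hz]; simpa using hqpos _
    · rw [← hDfd]
      exact natDegree_lt_natDegree hz (degree_sub_lt_left
        (by rw [degree_eq_natDegree hDf0, degree_eq_natDegree hEg0, hDfd, hEgd]) hDf0 hlead)
  have hw0 : D.comp f - E.comp g ∈ LinearMap.range (pairMap q f g (k - m) (l - m)) := by
    rw [hrange]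
    have heq : D.comp f - E.comp g = (D.comp f' - E.comp g').comp h := by
      rw [sub_comp, comp_assoc, comp_assoc, ← hff, ← hgg]
    rw [heq] at hw0d ⊢
    exact mem_range_mulRight hq1 hhd (by omega)
      (sub_mem (comp_mem hq hq1 hDQ hf') (comp_mem hq hq1 hEQ hg')) hw0d
  obtain ⟨v₀, hv₀⟩ := hw0
  refine ⟨AffineSubspace.mk' (-v₀) (LinearMap.ker (pairMap q f g (k - m) (l - m))), ?_, ?_, ?_⟩
  · ext v
    simp only [SetLike.mem_coe, AffineSubspace.mem_mk', vsub_eq_sub, LinearMap.mem_ker,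
      Set.mem_ofPred_eq, sub_neg_eq_add, map_add, hv₀]
    rw [pairMap_apply, P_apply, P_apply, add_comp, add_comp]
    refine Eq.congr ?_ rfl
    ring
  · exact ⟨-v₀, AffineSubspace.self_mem_mk' _ _⟩
  · rw [AffineSubspace.direction_mk']
    have hrn := LinearMap.finrank_range_add_finrank_ker (pairMap q f g (k - m) (l - m))
    rw [hrange, finrank_range_mulRight hq1 hhd] at hrn
    simp only [Module.finrank_fintype_fun_eq_card, Fintype.card_sum, Fintype.card_fin] at hrn
    omega
end

section
/- Let q be a prime power, let f(x) = Σ_{i=0}^{k} a_i x^{q^i} and g(x) = Σ_{i=0}^{l} b_i x^{q^i} be q-polynomials over the algebraic closure of F_q with a_k b_l ≠ 0, and let q^μ = deg gcd(f,g). Then for every 0 ≤ m ≤ μ, the nullity of the matrix R_{m,q}(f,g) (i.e. the dimension of the kernel of the linear map x ↦ x·R_{m,q}(f,g) on row vectors, equivalently (k+l−2m) minus the rank of R_{m,q}(f,g)) equals μ − m. -/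
/-!
The `q`-polynomials form a ring under addition and composition, with a division algorithm on the
right (`exists_div`), so the left ideal generated by `f` and `g` is generated by one element `d`
(`exists_bezout`). As `h ∣ u∘h` for every `q`-polynomial `u`, this `d` is also the ordinary gcd of
`f` and `g`, so it has `q`-degree `μ`.

A row vector encodes a pair `(u, v)` of `q`-polynomials of `q`-degrees less than `l - m` and
`k - m`, and its product with `R_{m,q}(f,g)` lists the coefficients of `u∘f + v∘g` at `X ^ q ^ t`
for `m ≤ t < k + l - m`. A left multiple of `d` whose `q`-degree is less than `m ≤ μ` vanishes, so
the kernel consists of the pairs with `u∘f + v∘g = 0`.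

The image of `(u, v) ↦ u∘f + v∘g` is the whole space of left multiples of `d` of `q`-degree less
than `k + l - m`: given such a multiple `u∘f + v∘g` with `u`, `v` unrestricted, reduce `u` modulo
the cofactor `u₁` of a relation `u₁∘f + v₁∘g = 0` with `u₁` of `q`-degree at most `l - μ`
(`exists_syzygy`), and compare degrees. This space has dimension `k + l - m - μ`, so the kernel has
dimension `(k + l - 2m) - (k + l - m - μ) = μ - m`.
-/

open Polynomial

section QPoly

/-! ### Spaces of `q`-polynomials and their degrees -/

variable {K : Type*} [Field K] {q : ℕ}

/-- The space of `q`-polynomials `∑_{i<n} c_i X^{q^i}` of `q`-degree less than `n`. -/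
noncomputable def QLT (K : Type*) [Field K] (q n : ℕ) : Submodule K K[X] :=
  Submodule.span K (Set.range fun i : Fin n => (X : K[X]) ^ q ^ (i : ℕ))

/-- The predicate of being a `q`-polynomial, of unspecified `q`-degree. -/
def IsQ (q : ℕ) (f : K[X]) : Prop := ∃ n, f ∈ QLT K q n

theorem mem_QLT {n : ℕ} {f : K[X]} :
    f ∈ QLT K q n ↔ ∃ c : ℕ → K, f = ∑ i ∈ Finset.range n, C (c i) * X ^ q ^ i := by
  unfold QLT
  rw [Submodule.mem_span_range_iff_exists_fun]
  constructor
  · rintro ⟨c, rfl⟩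
    refine ⟨fun i => if h : i < n then c ⟨i, h⟩ else 0, ?_⟩
    rw [Finset.sum_range]
    exact Finset.sum_congr rfl fun i _ => by simp [smul_eq_C_mul]
  · rintro ⟨c, rfl⟩
    refine ⟨fun i => c i, ?_⟩
    rw [Finset.sum_range]
    exact Finset.sum_congr rfl fun i _ => by simp [smul_eq_C_mul]

theorem X_pow_mem {n i : ℕ} (h : i < n) : (X : K[X]) ^ q ^ i ∈ QLT K q n :=
  Submodule.subset_span ⟨⟨i, h⟩, rfl⟩

theorem QLT_mono {m n : ℕ} (h : m ≤ n) : QLT K q m ≤ QLT K q n := by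
  refine Submodule.span_le.2 ?_
  rintro _ ⟨i, rfl⟩
  exact X_pow_mem (i.2.trans_le h)

theorem finrank_QLT (hq : 1 < q) (n : ℕ) : Module.finrank K (QLT K q n) = n := by
  unfold QLT
  rw [finrank_span_eq_card, Fintype.card_fin]
  have := (Polynomial.basisMonomials K).linearIndependent.comp (fun i : Fin n => q ^ (i : ℕ))
    (fun i j h => Fin.ext (Nat.pow_right_injective hq h))
  convert this using 2
  simp [X_pow_eq_monomial]

instance (n : ℕ) : FiniteDimensional K (QLT K q n) := by
  unfold QLT
  exact FiniteDimensional.span_of_finite K (Set.finite_range _)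

/-- A nonzero `q`-polynomial has degree a power of `q`. -/
theorem exists_natDegree (hq : 1 < q) {n : ℕ} {f : K[X]} (hf : f ∈ QLT K q n) (h0 : f ≠ 0) :
    ∃ i < n, f.natDegree = q ^ i ∧ f ∈ QLT K q (i + 1) := by
  induction n with
  | zero =>
    obtain ⟨c, rfl⟩ := mem_QLT.1 hf
    simp at h0
  | succ n ih =>
    obtain ⟨c, hc⟩ := mem_QLT.1 hf
    rw [Finset.sum_range_succ] at hc
    by_cases hn : c n = 0
    · obtain ⟨i, hi, h⟩ := ih (mem_QLT.2 ⟨c, by simpa [hn] using hc⟩)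
      exact ⟨i, by omega, h⟩
    · refine ⟨n, by omega, ?_, hf⟩
      have h1 : (∑ i ∈ Finset.range n, C (c i) * X ^ q ^ i).degree <
          (C (c n) * X ^ q ^ n).degree := by
        rw [degree_C_mul_X_pow _ hn]
        refine (degree_sum_le _ _).trans_lt ?_
        rw [Finset.sup_lt_iff (WithBot.bot_lt_coe _)]
        intro i hi
        refine (degree_C_mul_X_pow_le _ _).trans_lt ?_
        exact_mod_cast Nat.pow_lt_pow_right hq (Finset.mem_range.1 hi)
      rw [hc, natDegree_add_eq_right_of_degree_lt h1, natDegree_C_mul_X_pow _ _ hn]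

theorem natDegree_lt (hq : 1 < q) {n : ℕ} {f : K[X]} (hf : f ∈ QLT K q n) (h0 : f ≠ 0) :
    f.natDegree < q ^ n := by
  obtain ⟨i, hi, h, -⟩ := exists_natDegree hq hf h0
  rw [h]
  exact Nat.pow_lt_pow_right hq hi

theorem IsQ.mem_of_natDegree_lt (hq : 1 < q) {n : ℕ} {f : K[X]} (hf : IsQ q f)
    (h : f.natDegree < q ^ n) : f ∈ QLT K q n := by
  by_cases h0 : f = 0
  · simp [h0]
  obtain ⟨N, hN⟩ := hf
  obtain ⟨i, -, h2, h3⟩ := exists_natDegree hq hN h0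
  rw [h2] at h
  exact QLT_mono ((Nat.pow_lt_pow_iff_right hq).1 h) h3

theorem IsQ.add {f g : K[X]} (hf : IsQ q f) (hg : IsQ q g) : IsQ q (f + g) := by
  obtain ⟨n, hn⟩ := hf
  obtain ⟨m, hm⟩ := hg
  exact ⟨max n m, add_mem (QLT_mono (le_max_left _ _) hn) (QLT_mono (le_max_right _ _) hm)⟩

theorem IsQ.neg {f : K[X]} (hf : IsQ q f) : IsQ q (-f) := by
  obtain ⟨n, hn⟩ := hf
  exact ⟨n, neg_mem hn⟩

theorem IsQ.sub {f g : K[X]} (hf : IsQ q f) (hg : IsQ q g) : IsQ q (f - g) := by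
  rw [sub_eq_add_neg]
  exact hf.add hg.neg

/-! ### Composition of `q`-polynomials -/

theorem comp_eq_sum (c : ℕ → K) (n : ℕ) (f : K[X]) :
    (∑ i ∈ Finset.range n, C (c i) * X ^ q ^ i).comp f =
      ∑ i ∈ Finset.range n, C (c i) * f ^ q ^ i := by
  simp [comp, eval₂_finsetSum]

theorem sum_pow_q
    (hadd : ∀ (i : ℕ) (x y : K[X]), (x + y) ^ q ^ i = x ^ q ^ i + y ^ q ^ i)
    (hq : 1 < q) (s : Finset ℕ) (F : ℕ → K[X]) (i : ℕ) :
    (∑ j ∈ s, F j) ^ q ^ i = ∑ j ∈ s, F j ^ q ^ i := by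
  classical
  induction s using Finset.induction_on with
  | empty => simp; omega
  | insert a s ha ih => rw [Finset.sum_insert ha, Finset.sum_insert ha, hadd, ih]

theorem pow_mem_QLT
    (hadd : ∀ (i : ℕ) (x y : K[X]), (x + y) ^ q ^ i = x ^ q ^ i + y ^ q ^ i)
    (hq : 1 < q) {n : ℕ} {f : K[X]} (hf : f ∈ QLT K q n) (i : ℕ) :
    f ^ q ^ i ∈ QLT K q (n + i) := by
  obtain ⟨c, rfl⟩ := mem_QLT.1 hf
  rw [sum_pow_q hadd hq]
  refine Submodule.sum_mem _ fun j hj => ?_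
  rw [mul_pow, ← C_pow, ← smul_eq_C_mul, ← pow_mul, ← pow_add]
  exact Submodule.smul_mem _ _ (X_pow_mem (by have := Finset.mem_range.1 hj; omega))

theorem comp_mem
    (hadd : ∀ (i : ℕ) (x y : K[X]), (x + y) ^ q ^ i = x ^ q ^ i + y ^ q ^ i)
    (hq : 1 < q) {n m : ℕ} {u f : K[X]} (hu : u ∈ QLT K q n)
    (hf : f ∈ QLT K q (m + 1)) : u.comp f ∈ QLT K q (n + m) := by
  obtain ⟨c, rfl⟩ := mem_QLT.1 hu
  rw [comp_eq_sum]
  refine Submodule.sum_mem _ fun j hj => ?_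
  rw [← smul_eq_C_mul]
  refine Submodule.smul_mem _ _ (QLT_mono ?_ (pow_mem_QLT hadd hq hf j))
  have := Finset.mem_range.1 hj
  omega

theorem IsQ.comp
    (hadd : ∀ (i : ℕ) (x y : K[X]), (x + y) ^ q ^ i = x ^ q ^ i + y ^ q ^ i)
    (hq : 1 < q) {u f : K[X]} (hu : IsQ q u) (hf : IsQ q f) :
    IsQ q (u.comp f) := by
  obtain ⟨n, hn⟩ := hu
  obtain ⟨m, hm⟩ := hf
  exact ⟨_, comp_mem hadd hq hn (QLT_mono (Nat.le_succ m) hm)⟩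

theorem IsQ.comp_add
    (hadd : ∀ (i : ℕ) (x y : K[X]), (x + y) ^ q ^ i = x ^ q ^ i + y ^ q ^ i)
    {u : K[X]} (hu : IsQ q u) (f g : K[X]) :
    u.comp (f + g) = u.comp f + u.comp g := by
  obtain ⟨n, hn⟩ := hu
  obtain ⟨c, rfl⟩ := mem_QLT.1 hn
  simp only [comp_eq_sum, hadd, mul_add, Finset.sum_add_distrib]

/-! ### Right division and left ideals -/

/-- Division with remainder for composition: dividing on the right by a `q`-polynomial `g` of
degree `q ^ d`. -/
theorem exists_div
    (hadd : ∀ (i : ℕ) (x y : K[X]), (x + y) ^ q ^ i = x ^ q ^ i + y ^ q ^ i)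
    (hq : 1 < q) {d : ℕ} {g : K[X]} (hg : g ∈ QLT K q (d + 1))
    (hgd : g.natDegree = q ^ d) {n : ℕ} {f : K[X]} (hf : f ∈ QLT K q n) :
    ∃ s ∈ QLT K q (n - d), ∃ r ∈ QLT K q d, f = s.comp g + r := by
  induction n generalizing f with
  | zero => exact ⟨0, zero_mem _, f, QLT_mono (Nat.zero_le _) hf, by simp⟩
  | succ n ih =>
    by_cases hnd : n < d
    · exact ⟨0, zero_mem _, f, QLT_mono hnd hf, by simp⟩
    have hg0 : g ≠ 0 := by
      rintro rfl
      have : 0 < q ^ d := by positivity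
      simp at hgd
      omega
    set c : K := f.coeff (q ^ n) / g.leadingCoeff ^ q ^ (n - d) with hc
    have hlc : g.leadingCoeff ^ q ^ (n - d) ≠ 0 := pow_ne_zero _ (leadingCoeff_ne_zero.2 hg0)
    have hdeg : (g ^ q ^ (n - d)).natDegree = q ^ n := by
      rw [natDegree_pow, hgd, ← pow_add]
      congr 1
      omega
    have hcoeff : (g ^ q ^ (n - d)).coeff (q ^ n) = g.leadingCoeff ^ q ^ (n - d) := by
      rw [← hdeg, coeff_natDegree, leadingCoeff_pow]
    -- subtracting `c • g ^ q ^ (n - d)` kills the coefficient of `X ^ q ^ n`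
    have hmem : f - c • g ^ q ^ (n - d) ∈ QLT K q (n + 1) := by
      refine sub_mem hf (Submodule.smul_mem _ _ ?_)
      refine QLT_mono ?_ (pow_mem_QLT hadd hq hg _)
      omega
    have hmem' : f - c • g ^ q ^ (n - d) ∈ QLT K q n := by
      by_cases h0 : f - c • g ^ q ^ (n - d) = 0
      · simp [h0]
      obtain ⟨i, hi, h1, h2⟩ := exists_natDegree hq hmem h0
      have hin : i ≠ n := by
        rintro rfl
        apply leadingCoeff_ne_zero.2 h0
        rw [leadingCoeff, h1, coeff_sub, coeff_smul, hcoeff, hc, smul_eq_mul,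
          div_mul_cancel₀ _ hlc, sub_self]
      exact QLT_mono (by omega) h2
    obtain ⟨s, hs, r, hr, h⟩ := ih hmem'
    refine ⟨s + c • X ^ q ^ (n - d), add_mem (QLT_mono (by omega) hs)
      (Submodule.smul_mem _ _ (X_pow_mem (by omega))), r, hr, ?_⟩
    rw [add_comp, smul_comp, X_pow_comp, add_right_comm, ← h]
    ring

theorem IsQ.dvd_comp (hq : 1 < q) {u : K[X]} (hu : IsQ q u) {f h : K[X]} (hf : h ∣ f) :
    h ∣ u.comp f := by
  obtain ⟨n, hn⟩ := hu
  obtain ⟨c, rfl⟩ := mem_QLT.1 hn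
  rw [comp_eq_sum]
  exact Finset.dvd_sum fun i _ => (dvd_pow hf (by positivity)).mul_left _

/-- Left ideals of the ring of `q`-polynomials under composition are principal: `d` generates
the left ideal spanned by `f` and `g`. -/
theorem exists_bezout
    (hadd : ∀ (i : ℕ) (x y : K[X]), (x + y) ^ q ^ i = x ^ q ^ i + y ^ q ^ i)
    (hq : 1 < q) {f g : K[X]} (hf : IsQ q f) (hg : IsQ q g) (hf0 : f ≠ 0) :
    ∃ u v s t d : K[X], IsQ q u ∧ IsQ q v ∧ IsQ q s ∧ IsQ q t ∧ IsQ q d ∧ d ≠ 0 ∧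
      d = u.comp f + v.comp g ∧ f = s.comp d ∧ g = t.comp d := by
  classical
  have hX : IsQ q (X : K[X]) := ⟨1, by simpa using X_pow_mem (K := K) (q := q) zero_lt_one⟩
  have h0 : IsQ q (0 : K[X]) := ⟨0, zero_mem _⟩
  have hex : ∃ n, ∃ u v : K[X], IsQ q u ∧ IsQ q v ∧ u.comp f + v.comp g ≠ 0 ∧
      (u.comp f + v.comp g).natDegree = n :=
    ⟨_, X, 0, hX, h0, by simpa using hf0, rfl⟩
  obtain ⟨u, v, hu, hv, hd0, hdn⟩ := Nat.find_spec hex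
  have hmin := fun m (hm : m < Nat.find hex) => Nat.find_min hex hm
  rw [← hdn] at hmin
  set d := u.comp f + v.comp g with hd
  have hdQ : IsQ q d := (hu.comp hadd hq hf).add (hv.comp hadd hq hg)
  -- the remainder of any `u'∘f + v'∘g` on division by `d` is again of this form
  have key : ∀ u' v', IsQ q u' → IsQ q v' → ∃ s, IsQ q s ∧
      u'.comp f + v'.comp g = s.comp d := by
    intro u' v' hu' hv'
    obtain ⟨N, hN⟩ := hdQ
    obtain ⟨i, -, hi, hmem⟩ := exists_natDegree hq hN hd0
    obtain ⟨M, hM⟩ := (hu'.comp hadd hq hf).add (hv'.comp hadd hq hg)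
    obtain ⟨s, hs, r, hr, h⟩ := exists_div hadd hq hmem hi hM
    have hs' : IsQ q s := ⟨_, hs⟩
    refine ⟨s, hs', ?_⟩
    by_cases hr0 : r = 0
    · simpa [hr0] using h
    exfalso
    have hre : r = (u' - s.comp u).comp f + (v' - s.comp v).comp g := by
      rw [sub_comp, sub_comp, comp_assoc, comp_assoc]
      rw [hd, hs'.comp_add hadd] at h
      linear_combination -h
    refine hmin r.natDegree ?_ ⟨u' - s.comp u, v' - s.comp v,
      hu'.sub (hs'.comp hadd hq hu), hv'.sub (hs'.comp hadd hq hv), ?_, ?_⟩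
    · rw [hi]
      exact natDegree_lt hq hr hr0
    · rwa [← hre]
    · rw [← hre]
  obtain ⟨s, hs, hs'⟩ := key X 0 hX h0
  obtain ⟨t, ht, hgtd⟩ := key 0 X h0 hX
  exact ⟨u, v, s, t, d, hu, hv, hs, ht, hdQ, hd0, rfl, by simpa using hs', by simpa using hgtd⟩

/-! ### Coefficients and relations of two `q`-polynomials -/

theorem natDegree_qsum (hq : 1 < q) {k : ℕ} {a : ℕ → K} (ha : a k ≠ 0) :
    (∑ i ∈ Finset.range (k + 1), C (a i) * X ^ q ^ i).natDegree = q ^ k := by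
  have hmem : (∑ i ∈ Finset.range (k + 1), C (a i) * X ^ q ^ i) ∈ QLT K q (k + 1) :=
    mem_QLT.2 ⟨a, rfl⟩
  have hco : (∑ i ∈ Finset.range (k + 1), C (a i) * X ^ q ^ i).coeff (q ^ k) = a k := by
    simp only [finsetSum_coeff, coeff_C_mul_X_pow, (Nat.pow_right_injective hq).eq_iff]
    simp
  have h0 : (∑ i ∈ Finset.range (k + 1), C (a i) * X ^ q ^ i) ≠ 0 := by
    intro h
    rw [h] at hco
    exact ha (by simpa using hco.symm)
  obtain ⟨i, hi, h1, -⟩ := exists_natDegree hq hmem h0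
  have h2 := le_natDegree_of_ne_zero (hco.trans_ne ha)
  rw [h1, Nat.pow_le_pow_iff_right hq] at h2
  rw [h1, show i = k by omega]

theorem coeff_qsum_pow
    (hadd : ∀ (i : ℕ) (x y : K[X]), (x + y) ^ q ^ i = x ^ q ^ i + y ^ q ^ i)
    (hq : 1 < q) (k s t : ℕ) (a : ℕ → K) :
    ((∑ i ∈ Finset.range (k + 1), C (a i) * X ^ q ^ i) ^ q ^ s).coeff (q ^ t) =
      if s ≤ t ∧ t ≤ k + s then a (t - s) ^ q ^ s else 0 := by
  rw [sum_pow_q hadd hq]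
  simp only [mul_pow, ← pow_mul, ← pow_add, ← C_pow, finsetSum_coeff, coeff_C_mul_X_pow,
    (Nat.pow_right_injective hq).eq_iff]
  split_ifs with h
  · rw [Finset.sum_eq_single (t - s)]
    · rw [if_pos (by omega)]
    · intro b _ hb
      rw [if_neg (by omega)]
    · intro hb
      simp at hb
      omega
  · refine Finset.sum_eq_zero fun i hi => ?_
    rw [if_neg]
    have := Finset.mem_range.1 hi
    omega

/-- If `f = s∘d` and `g = t∘d ≠ 0`, with `s` and `t` of `q`-degrees at most `k - μ` and `l - μ`, then
there is a nontrivial relation `u∘f + v∘g = 0` with `u` nonzero of `q`-degree at most `l - μ`: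
the map `(u, v) ↦ u∘s + v∘t` goes from dimension `k + l - 2 * μ + 2` to dimension
`k + l - 2 * μ + 1`, hence has a kernel. -/
theorem exists_syzygy
    (hadd : ∀ (i : ℕ) (x y : K[X]), (x + y) ^ q ^ i = x ^ q ^ i + y ^ q ^ i)
    (hq : 1 < q) {k l μ : ℕ} {f g d s t : K[X]}
    (hkμ : μ ≤ k) (hlμ : μ ≤ l)
    (hs : s ∈ QLT K q (k - μ + 1)) (ht : t ∈ QLT K q (l - μ + 1))
    (hf : f = s.comp d) (hg : g = t.comp d) (hg0 : g.natDegree = q ^ l) :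
    ∃ u ∈ QLT K q (l - μ + 1), ∃ v ∈ QLT K q (k - μ + 1), u ≠ 0 ∧
      u.comp f + v.comp g = 0 := by
  let L : (QLT K q (l - μ + 1) × QLT K q (k - μ + 1)) →ₗ[K] QLT K q (k + l - 2 * μ + 1) :=
    LinearMap.codRestrict _
      (((aeval s).toLinearMap ∘ₗ (QLT K q (l - μ + 1)).subtype).coprod
        ((aeval t).toLinearMap ∘ₗ (QLT K q (k - μ + 1)).subtype)) (by
      rintro ⟨⟨u, hu⟩, ⟨v, hv⟩⟩
      simp only [LinearMap.coprod_apply, LinearMap.comp_apply, Submodule.subtype_apply,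
        AlgHom.toLinearMap_apply, ← comp_eq_aeval]
      exact add_mem (QLT_mono (by omega) (comp_mem hadd hq hu hs))
        (QLT_mono (by omega) (comp_mem hadd hq hv ht)))
  obtain ⟨⟨⟨u, hu⟩, ⟨v, hv⟩⟩, hx, hx0⟩ := Submodule.exists_mem_ne_zero_of_ne_bot
    (LinearMap.ker_ne_bot_of_finrank_lt (f := L) (by
      rw [Module.finrank_prod, finrank_QLT hq, finrank_QLT hq, finrank_QLT hq]
      omega))
  have hx' : u.comp s + v.comp t = 0 := by
    have := congrArg Subtype.val (LinearMap.mem_ker.1 hx)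
    simpa [L, comp_eq_aeval] using this
  have hfg : u.comp f + v.comp g = 0 := by
    rw [hf, hg, ← comp_assoc, ← comp_assoc, ← add_comp, hx', zero_comp]
  refine ⟨u, hu, v, hv, ?_, hfg⟩
  rintro rfl
  -- if `u = 0` then `v∘g = 0`, whence `v = 0` by degrees
  have hv0 : v ≠ 0 := by
    rintro rfl
    exact hx0 rfl
  obtain ⟨i, -, hi, -⟩ := exists_natDegree hq hv hv0
  have h1 : (v.comp g).natDegree = q ^ i * q ^ l := by rw [natDegree_comp, hi, hg0]
  rw [zero_comp, zero_add] at hfg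
  rw [hfg, natDegree_zero] at h1
  have : 0 < q ^ i * q ^ l := by positivity
  omega

end QPoly

/-! ### The nullity of the subresultant matrix -/

/-- The nullity formula over any field on whose polynomials `q`-power maps are additive. The rows
of the matrix are the coefficient vectors of the polynomials `f ^ q ^ i` (`i < l - m`) and
`g ^ q ^ j` (`j < k - m`), whose span is the space of left multiples of the generator `d` of
`q`-degree less than `k + l - m`; truncating at `X ^ q ^ m` loses nothing, since `m ≤ μ`. -/
theorem nullity_aux {K : Type*} [Field K] {q k l μ m : ℕ} (hq : 1 < q)
    (hadd : ∀ (i : ℕ) (x y : K[X]), (x + y) ^ q ^ i = x ^ q ^ i + y ^ q ^ i)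
    [DecidableEq K[X]]
    (a b : ℕ → K) (ha : a k ≠ 0) (hb : b l ≠ 0)
    (hμ : (EuclideanDomain.gcd
        (∑ i ∈ Finset.range (k + 1), C (a i) * X ^ q ^ i)
        (∑ i ∈ Finset.range (l + 1), C (b i) * X ^ q ^ i)).natDegree = q ^ μ)
    (hm : m ≤ μ) :
    Module.finrank K (LinearMap.ker (Rmat q k l m a b).vecMulLinear) = μ - m := by
  have hfd := natDegree_qsum hq ha
  have hgd := natDegree_qsum hq hb
  have hcf := coeff_qsum_pow hadd hq k (a := a)
  have hcg := coeff_qsum_pow hadd hq l (a := b)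
  have hfm : (∑ i ∈ Finset.range (k + 1), C (a i) * X ^ q ^ i) ∈ QLT K q (k + 1) :=
    mem_QLT.2 ⟨a, rfl⟩
  have hgm : (∑ i ∈ Finset.range (l + 1), C (b i) * X ^ q ^ i) ∈ QLT K q (l + 1) :=
    mem_QLT.2 ⟨b, rfl⟩
  generalize (∑ i ∈ Finset.range (k + 1), C (a i) * X ^ q ^ i) = f at *
  generalize (∑ i ∈ Finset.range (l + 1), C (b i) * X ^ q ^ i) = g at *
  have hpos : ∀ i, 0 < q ^ i := fun i => by positivity
  have hne : ∀ {h : K[X]} {i : ℕ}, h.natDegree = q ^ i → h ≠ 0 := by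
    rintro h i hh rfl
    have := hpos i
    simp at hh
    omega
  have hf0 := hne hfd
  have hg0 := hne hgd
  have hμk : μ ≤ k := by
    have := natDegree_le_of_dvd (EuclideanDomain.gcd_dvd_left f g) hf0
    rwa [hμ, hfd, Nat.pow_le_pow_iff_right hq] at this
  have hμl : μ ≤ l := by
    have := natDegree_le_of_dvd (EuclideanDomain.gcd_dvd_right f g) hg0
    rwa [hμ, hgd, Nat.pow_le_pow_iff_right hq] at this
  obtain ⟨u₀, v₀, s, t, d, hu₀, hv₀, hs, ht, hdQ, hd0, hd, hfs, hgt⟩ :=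
    exists_bezout hadd hq ⟨_, hfm⟩ ⟨_, hgm⟩ hf0
  have hdd : d.natDegree = q ^ μ := by
    rw [← hμ]
    refine natDegree_eq_of_degree_eq (degree_eq_degree_of_associated
      (associated_of_dvd_dvd (EuclideanDomain.dvd_gcd ?_ ?_) ?_))
    · rw [hfs]; exact hs.dvd_comp hq dvd_rfl
    · rw [hgt]; exact ht.dvd_comp hq dvd_rfl
    · rw [hd]
      exact dvd_add (hu₀.dvd_comp hq (EuclideanDomain.gcd_dvd_left f g))
        (hv₀.dvd_comp hq (EuclideanDomain.gcd_dvd_right f g))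
  have hdm : d ∈ QLT K q (μ + 1) :=
    hdQ.mem_of_natDegree_lt hq (by rw [hdd]; exact Nat.pow_lt_pow_right hq (by omega))
  -- cancelling a right factor lowers the bound on the `q`-degree accordingly
  have hcancel : ∀ {w h : K[X]} {i n : ℕ}, IsQ q w → h.natDegree = q ^ i →
      w.comp h ∈ QLT K q n → w ∈ QLT K q (n - i) := by
    intro w h i n hw hh hwh
    by_cases hw0 : w = 0
    · simp [hw0]
    obtain ⟨N, hN⟩ := hw
    obtain ⟨j, -, hj, hjm⟩ := exists_natDegree hq hN hw0
    have h1 : (w.comp h).natDegree = q ^ (j + i) := by rw [natDegree_comp, hj, hh, pow_add]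
    have h2 := natDegree_lt hq hwh (hne h1)
    rw [h1, Nat.pow_lt_pow_iff_right hq] at h2
    exact QLT_mono (by omega) hjm
  have hsm : s ∈ QLT K q (k - μ + 1) :=
    QLT_mono (by omega) (hcancel hs hdd (hfs ▸ hfm))
  have htm : t ∈ QLT K q (l - μ + 1) :=
    QLT_mono (by omega) (hcancel ht hdd (hgt ▸ hgm))
  obtain ⟨u₁, hu₁, v₁, hv₁, hu₁0, hsyz⟩ :=
    exists_syzygy hadd hq hμk hμl hsm htm hfs hgt hgd
  have hcomp : ∀ w h : K[X], (aeval h).toLinearMap w = w.comp h := fun w h => by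
    rw [AlgHom.toLinearMap_apply, ← comp_eq_aeval]
  -- the left multiples of `d` of `q`-degree less than `k + l - m`
  set M : Submodule K K[X] := (QLT K q (k + l - m - μ)).map (aeval d).toLinearMap with hM
  have hMmem : ∀ {h}, h ∈ M ↔ ∃ w ∈ QLT K q (k + l - m - μ), w.comp d = h := by
    intro h
    simp only [hM, Submodule.mem_map, hcomp]
  have hMfin : Module.finrank K M = k + l - m - μ := by
    have hinj : Function.Injective (aeval d : K[X] →ₐ[K] K[X]).toLinearMap := by
      rw [← LinearMap.ker_eq_bot, LinearMap.ker_eq_bot']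
      intro w hw
      rw [hcomp, comp_eq_zero_iff] at hw
      rcases hw with hw | ⟨-, hw⟩
      · exact hw
      · rw [hw, natDegree_C] at hdd
        have := hpos μ
        omega
    rw [hM, ← (Submodule.equivMapOfInjective _ hinj _).finrank_eq, finrank_QLT hq]
  let row : Fin (k + l - 2 * m) → K[X] := fun i =>
    if i.val < l - m then f ^ q ^ (l - m - 1 - i.val)
    else g ^ q ^ (k - m - 1 - (i.val - (l - m)))
  have hpowM : ∀ {h w : K[X]} {i n : ℕ}, h = w.comp d → w ∈ QLT K q n →
      n + i ≤ k + l - m - μ → h ^ q ^ i ∈ M := by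
    intro h w i n hh hw hn
    refine hMmem.2 ⟨w ^ q ^ i, QLT_mono hn (pow_mem_QLT hadd hq hw i), ?_⟩
    rw [pow_comp, hh]
  have hrange : LinearMap.range (Fintype.linearCombination K row) = M := by
    rw [Fintype.range_linearCombination]
    apply le_antisymm
    · rw [Submodule.span_le]
      rintro _ ⟨i, rfl⟩
      have := i.2
      simp only [row, SetLike.mem_coe]
      split_ifs
      · exact hpowM hfs hsm (by omega)
      · exact hpowM hgt htm (by omega)
    · intro h hh
      obtain ⟨w, hw, rfl⟩ := hMmem.1 hh
      have hwQ : IsQ q w := ⟨_, hw⟩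
      -- reduce the cofactor of `f` modulo `u₁`; the cofactor of `g` is then small by degrees
      obtain ⟨j, hj, hju, hjm⟩ := exists_natDegree hq hu₁ hu₁0
      obtain ⟨n, hn⟩ := hwQ.comp hadd hq hu₀
      obtain ⟨x, hx, r, hr, hxr⟩ := exists_div hadd hq hjm hju hn
      have hxQ : IsQ q x := ⟨_, hx⟩
      have hr' : r ∈ QLT K q (l - m) := QLT_mono (by omega) hr
      set v := w.comp v₀ - x.comp v₁ with hv
      have hvQ : IsQ q v := (hwQ.comp hadd hq hv₀).sub (hxQ.comp hadd hq ⟨_, hv₁⟩)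
      have hdec : w.comp d = r.comp f + v.comp g := by
        have h1 : x.comp (u₁.comp f) + x.comp (v₁.comp g) = 0 := by
          rw [← hxQ.comp_add hadd, hsyz]
          simpa using hxQ.comp_add hadd 0 0
        have h2 : w.comp (u₀.comp f) = x.comp (u₁.comp f) + r.comp f := by
          rw [← comp_assoc, hxr, add_comp, comp_assoc]
        rw [hd, hwQ.comp_add hadd, h2, hv, sub_comp, comp_assoc, comp_assoc]
        linear_combination h1
      have hv' : v ∈ QLT K q (k - m) := by
        have h3 : v.comp g ∈ QLT K q (k + l - m) := by
          have : v.comp g = w.comp d - r.comp f := by rw [hdec]; ring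
          rw [this]
          exact sub_mem (QLT_mono (by omega) (comp_mem hadd hq hw hdm))
            (QLT_mono (by omega) (comp_mem hadd hq hr' hfm))
        exact QLT_mono (by omega) (hcancel hvQ hgd h3)
      rw [hdec]
      obtain ⟨c, rfl⟩ := mem_QLT.1 hr'
      obtain ⟨c', hc'⟩ := mem_QLT.1 hv'
      rw [hc', comp_eq_sum, comp_eq_sum]
      refine add_mem (Submodule.sum_mem _ fun i hi => ?_) (Submodule.sum_mem _ fun i hi => ?_)
      · have hi := Finset.mem_range.1 hi
        rw [← smul_eq_C_mul]
        refine Submodule.smul_mem _ _ (Submodule.subset_span ⟨⟨l - m - 1 - i, by omega⟩, ?_⟩)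
        simp only [row]
        rw [if_pos (by omega), show l - m - 1 - (l - m - 1 - i) = i by omega]
      · have hi := Finset.mem_range.1 hi
        rw [← smul_eq_C_mul]
        refine Submodule.smul_mem _ _
          (Submodule.subset_span ⟨⟨(l - m) + (k - m - 1 - i), by omega⟩, ?_⟩)
        simp only [row]
        rw [if_neg (by omega),
          show k - m - 1 - (l - m + (k - m - 1 - i) - (l - m)) = i by omega]
  have hcoeff : ∀ i j, Rmat q k l m a b i j = (row i).coeff (q ^ (k + l - m - 1 - j.val)) := by
    intro i j
    have := i.2
    have := j.2
    simp only [row, Rmat, Matrix.of_apply]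
    split_ifs with h1 h2 h2
    · rw [hcf, if_pos (by omega)]
      congr 2; omega
    · rw [hcf, if_neg (by omega)]
    · rw [hcg, if_pos (by omega)]
      congr 2; omega
    · rw [hcg, if_neg (by omega)]
  have hvec : ∀ x j, Matrix.vecMul x (Rmat q k l m a b) j =
      (Fintype.linearCombination K row x).coeff (q ^ (k + l - m - 1 - j.val)) := by
    intro x j
    simp only [Matrix.vecMul, dotProduct, hcoeff, Fintype.linearCombination_apply,
      finsetSum_coeff, coeff_smul, smul_eq_mul]
  have hker : LinearMap.ker (Rmat q k l m a b).vecMulLinear =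
      LinearMap.ker (Fintype.linearCombination K row) := by
    ext x
    rw [LinearMap.mem_ker, LinearMap.mem_ker, Matrix.vecMulLinear_apply]
    constructor
    · intro hx
      by_contra hx0
      have hxM : Fintype.linearCombination K row x ∈ M := hrange ▸ LinearMap.mem_range_self _ x
      obtain ⟨w, hw, hwd⟩ := hMmem.1 hxM
      have hw0 : w ≠ 0 := by
        rintro rfl
        exact hx0 (by rw [← hwd, zero_comp])
      -- a nonzero left multiple of `d` has its leading term in degree `q ^ (i + μ)`, `m ≤ i + μ`,
      -- and that coefficient is an entry of the product vector
      obtain ⟨i, hi, hiw, -⟩ := exists_natDegree hq hw hw0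
      have hdeg : (Fintype.linearCombination K row x).natDegree = q ^ (i + μ) := by
        rw [← hwd, natDegree_comp, hiw, hdd, pow_add]
      have h1 := hvec x ⟨k + l - m - 1 - (i + μ), by omega⟩
      rw [hx, show k + l - m - 1 - (k + l - m - 1 - (i + μ)) = i + μ by omega, ← hdeg] at h1
      exact hx0 (leadingCoeff_eq_zero.1 h1.symm)
    · intro hx
      ext j
      rw [hvec, hx]
      simp
  have hrn := LinearMap.finrank_range_add_finrank_ker (Fintype.linearCombination K row)
  rw [hrange, hMfin, Module.finrank_fin_fun] at hrn
  rw [hker]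
  omega

/-- Proposition: if `deg gcd(f,g) = q^μ` and `0 ≤ m ≤ μ`, then the nullity of
`R_{m,q}(f,g)` (the dimension of the kernel of the row-vector map `x ↦ x ⬝ R_{m,q}(f,g)`,
equivalently `(k+l-2m)` minus the rank) equals `μ - m`. -/
theorem stmt_3 (p e q k l μ m : ℕ) [Fact p.Prime] (he : 0 < e) (hq : q = p ^ e)
    [DecidableEq (Polynomial (AlgebraicClosure (ZMod p)))]
    (a b : ℕ → AlgebraicClosure (ZMod p)) (ha : a k ≠ 0) (hb : b l ≠ 0)
    (hμ : (EuclideanDomain.gcd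
        (∑ i ∈ Finset.range (k + 1), C (a i) * X ^ q ^ i)
        (∑ i ∈ Finset.range (l + 1), C (b i) * X ^ q ^ i)).natDegree = q ^ μ)
    (hm : m ≤ μ) :
    Module.finrank (AlgebraicClosure (ZMod p))
        (LinearMap.ker (Rmat q k l m a b).vecMulLinear) = μ - m ∧
      (k + l - 2 * m) - (Rmat q k l m a b).rank = μ - m := by
  have hq1 : 1 < q := hq ▸ Nat.one_lt_pow he.ne' (Fact.out : p.Prime).one_lt
  have : CharP (AlgebraicClosure (ZMod p)) p := charP_of_injective_algebraMap
    (algebraMap (ZMod p) (AlgebraicClosure (ZMod p))).injective p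
  have hadd : ∀ (i : ℕ) (x y : (AlgebraicClosure (ZMod p))[X]),
      (x + y) ^ q ^ i = x ^ q ^ i + y ^ q ^ i := by
    intro i x y
    rw [hq, ← pow_mul, add_pow_char_pow]
  have h := nullity_aux hq1 hadd a b ha hb hμ hm
  refine ⟨h, ?_⟩
  have hrn := LinearMap.finrank_range_add_finrank_ker (Rmat q k l m a b).vecMulLinear
  have hrank : (Rmat q k l m a b).rank =
      Module.finrank (AlgebraicClosure (ZMod p))
        (LinearMap.range (Rmat q k l m a b).vecMulLinear) := by
    rw [Matrix.rank_eq_finrank_span_row, range_vecMulLinear]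
  rw [h, ← hrank, Module.finrank_fin_fun] at hrn
  omega
end

section
/- Let F be a field (or commutative ring), let 0 < l ≤ k be integers, let A and C be k×l matrices over F, and let B be a k×(k−l) matrix over F. Let M be the (k+l)×(k+l) block matrix M = [[A, B, C], [I_l, O, −I_l]], where I_l is the l×l identity matrix and O is the l×(k−l) zero matrix, and let N be the k×k block matrix N = [B | A+C]. Then det(M) = (−1)^{l(k−l+1)} det(N). -/
/-!
The `l`-th power of the rotation of `Fin (k + l)` carries the columns `[A | B | C]` of `M` to
`[B | C | A]`, at the cost of the sign `(-1) ^ (l * (k + l - 1))`, which has the same parity as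
`l * (k - l + 1)`. After splitting the rows and columns as `k + l`, the matrix becomes
`[[P, A], [E, 1]]` with `P = [B | C]` and `E = [0 | -1]`, so its determinant is the Schur
complement determinant `det (P - A * E) = det [B | A + C]`.
-/

/-- The `l`-fold rotation of `Fin n` is the shift by `l` modulo `n`. -/
lemma finRotate_pow_val (n l : ℕ) (i : Fin n) : ((finRotate n ^ l) i).val = (i.val + l) % n := by
  induction l with
  | zero => simp [Nat.mod_eq_of_lt i.isLt]
  | succ l ih =>
    obtain _ | m := n
    · exact i.elim0
    rw [pow_succ', Equiv.Perm.mul_apply, finRotate_apply, Fin.val_add, ih]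
    simp [Nat.add_assoc]

/-- Corollary (block determinant identity): for `0 < l ≤ k`, `k×l` matrices `A, C`, and a
`k×(k-l)` matrix `B`, the `(k+l)×(k+l)` block matrix `M = [[A, B, C], [I_l, O, -I_l]]`
and the `k×k` block matrix `N = [B | A+C]` satisfy
`det M = (-1)^(l(k-l+1)) det N`. -/
theorem stmt_5 (R : Type*) [CommRing R] (k l : ℕ) (hl : 0 < l) (hlk : l ≤ k)
    (A C : Matrix (Fin k) (Fin l) R) (B : Matrix (Fin k) (Fin (k - l)) R) :
    (Matrix.of fun i j : Fin (k + l) =>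
        if hi : i.val < k then
          if hj : j.val < l then A ⟨i.val, hi⟩ ⟨j.val, hj⟩
          else if hj2 : j.val < k then B ⟨i.val, hi⟩ ⟨j.val - l, by omega⟩
          else C ⟨i.val, hi⟩ ⟨j.val - k, by have := j.isLt; omega⟩
        else
          if j.val < l then (if j.val = i.val - k then (1 : R) else 0)
          else if j.val < k then 0
          else (if j.val - k = i.val - k then -1 else 0)).det =
      (-1) ^ (l * (k - l + 1)) *
        (Matrix.of fun i j : Fin k =>
          if hj : j.val < k - l then B i ⟨j.val, hj⟩
          else A i ⟨j.val - (k - l), by have := j.isLt; omega⟩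
            + C i ⟨j.val - (k - l), by have := j.isLt; omega⟩).det := by
  set M : Matrix (Fin (k + l)) (Fin (k + l)) R := Matrix.of _ with hM
  set N : Matrix (Fin k) (Fin k) R := Matrix.of _ with hN
  let σ : Equiv.Perm (Fin (k + l)) := finRotate (k + l) ^ l
  have hσ (i : Fin (k + l)) : (σ i).val = (i.val + l) % (k + l) := finRotate_pow_val _ _ i
  have hσ₁ (j : Fin k) : (σ (Fin.castAdd l j)).val = j.val + l := by
    rw [hσ, Fin.val_castAdd, Nat.mod_eq_of_lt (by omega)]
  have hσ₂ (j : Fin l) : (σ (Fin.natAdd k j)).val = j.val := by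
    rw [hσ, Fin.val_natAdd, show k + j.val + l = j.val + (k + l) by omega, Nat.add_mod_right,
      Nat.mod_eq_of_lt (by omega)]
  have hsign : ((Equiv.Perm.sign σ : ℤ) : R) = (-1) ^ (l * (k - l + 1)) := by
    have hpar : (-1 : R) ^ (k + l - 1) = (-1) ^ (k - l + 1) := by
      rw [show k + l - 1 = (k - l + 1) + 2 * (l - 1) by omega, pow_add, pow_mul]
      simp
    simp only [σ, map_pow, sign_finRotate]
    push_cast
    rw [hpar, ← pow_mul, mul_comm]
  let P : Matrix (Fin k) (Fin k) R := Matrix.of fun i j =>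
    if hj : j.val < k - l then B i ⟨j.val, hj⟩ else C i ⟨j.val - (k - l), by omega⟩
  let E : Matrix (Fin l) (Fin k) R := Matrix.of fun t j =>
    if j.val = k - l + t.val then -1 else 0
  have hblocks : (M.submatrix id σ).submatrix finSumFinEquiv finSumFinEquiv
      = Matrix.fromBlocks P A E 1 := by
    ext i j
    rcases i with i | i <;> rcases j with j | j
    · simp only [hM, P, Matrix.submatrix_apply, Matrix.of_apply, id, finSumFinEquiv_apply_left,
        Matrix.fromBlocks_apply₁₁, hσ₁, Fin.val_castAdd]
      have := i.isLt
      split_ifs <;> first | omega | (congr 2; omega)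
    · simp [hM, hσ₂]
    · simp only [hM, E, Matrix.submatrix_apply, Matrix.of_apply, id, finSumFinEquiv_apply_left,
        finSumFinEquiv_apply_right, Matrix.fromBlocks_apply₂₁, hσ₁, Fin.val_natAdd]
      split_ifs <;> first | omega | rfl
    · simp [hM, hσ₂, Matrix.one_apply, Fin.ext_iff, eq_comm]
  have hschur : P - A * E = N := by
    ext i j
    simp only [Matrix.sub_apply, Matrix.mul_apply, P, E, hN, Matrix.of_apply]
    by_cases hj : j.val < k - l
    · rw [dif_pos hj, dif_pos hj, Finset.sum_eq_zero, sub_zero]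
      intro t _
      rw [if_neg (by omega), mul_zero]
    · rw [dif_neg hj, dif_neg hj, Finset.sum_eq_single ⟨j.val - (k - l), by omega⟩]
      · rw [if_pos (by simp only; omega)]
        ring
      · intro t _ ht
        rw [if_neg, mul_zero]
        intro h
        exact ht (Fin.ext (by simp only; omega))
      · simp
  have hdet : (M.submatrix id σ).det = N.det := by
    rw [← Matrix.det_submatrix_equiv_self finSumFinEquiv, hblocks, Matrix.det_fromBlocks_one₂₂,
      hschur]
  rw [Matrix.det_permute', hsign] at hdet
  rw [← hdet, ← mul_assoc, ← mul_pow]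
  simp
end

section
/- Let q be a prime power, let n ≥ 1, let s be an integer with gcd(s,n) = 1, put σ = q^s, and let f(x) = Σ_{i=0}^{n−1} a_i x^{q^i} ∈ F_{q^n}[x]. Let P be the n×n permutation matrix such that for every n×n matrix A, the i-th row of PA is the (s·i mod n)-th row of A. Then P D(f) P^{−1} = D_σ(g), where g(x) = Σ_{i=0}^{n−1} a_{(s·i) mod n} x^{σ^i}; in particular, the rank of D(f) equals the rank of the σ-Dickson matrix obtained by this conjugation. -/
/-!
Conjugation by the permutation matrix of `π : i ↦ s·i mod n` turns `D(f)` into the matrix with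
`(i, j)` entry `D(f) (π i) (π j)`. Its coefficient index is `s·j - s·i = s·(j - i)` modulo `n`
(`mul_index_mod`), and its exponent `q ^ (s·i mod n)` may be replaced by `q ^ (s·i) = σ ^ i`,
since `x ^ q ^ n = x` in a field with `q ^ n` elements (`pow_q_pow_mod`). Simultaneously
permuting rows and columns preserves the rank.
-/

/-- The full `σ`-Dickson matrix of `g = ∑_{i=0}^{n-1} b_i x^{σ^i}`: the `n × n` matrix
with `(i,j)` entry `b_((j-i) mod n) ^ (σ ^ i)` (first argument playing the role of `σ`;
with `σ = q` this is the ordinary Dickson matrix). -/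
noncomputable def dickFull (σ n : ℕ) {F : Type*} [Field F] (a : ℕ → F) :
    Matrix (Fin n) (Fin n) F :=
  Matrix.of fun i j => a ((j.val + n - i.val) % n) ^ σ ^ i.val

/-- Reducing an exponent modulo `n` does not change an iterated `q`-power in `F_{q^n}`. -/
lemma pow_q_pow_mod {F : Type*} [Field F] [Fintype F] {q n : ℕ}
    (hF : Fintype.card F = q ^ n) (x : F) (m : ℕ) : x ^ q ^ (m % n) = x ^ q ^ m := by
  conv_rhs => rw [← Nat.mod_add_div m n, pow_add, pow_mul x, pow_mul q, ← hF]
  exact (FiniteField.pow_card_pow _ _).symm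

/-- The index of row `s·i`, column `s·j` of a circulant pattern is `s` times that of `(i, j)`. -/
lemma mul_index_mod {n : ℕ} (s i j : ℕ) (hi : i < n) :
    ((s * j) % n + n - (s * i) % n) % n = (s * ((j + n - i) % n)) % n := by
  have hlt : (s * i) % n < n := Nat.mod_lt _ (by omega)
  have key : ((s * j) % n + n - (s * i) % n) ≡ s * ((j + n - i) % n) [MOD n] := by
    rw [← ZMod.natCast_eq_natCast_iff, Nat.cast_sub (by omega)]
    push_cast [ZMod.natCast_mod]
    rw [Nat.cast_sub (by omega)]
    push_cast [ZMod.natCast_self]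
    ring
  exact key

/-- For `s` coprime to `n`, the permutation `i ↦ s·i mod n` of the indices. -/
noncomputable def mulPerm (s n : ℕ) (hn : 0 < n) (hs : Nat.gcd s n = 1) : Equiv.Perm (Fin n) :=
  Equiv.ofBijective (fun i => ⟨(s * i.val) % n, Nat.mod_lt _ hn⟩) <| by
    refine Finite.injective_iff_bijective.mp fun i j h => Fin.ext ?_
    have h1 : s * i.val ≡ s * j.val [MOD n] := congrArg Fin.val h
    have h2 := Nat.ModEq.cancel_left_of_coprime (by rwa [Nat.gcd_comm]) h1
    exact Nat.ModEq.eq_of_lt_of_lt h2 i.isLt j.isLt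

/-- With `σ = q^s`, `gcd(s,n) = 1`, `f = ∑_{i=0}^{n-1} a_i x^{q^i} ∈ F_{q^n}[x]`, and `P`
the permutation matrix whose `i`-th row of `P·A` is the `(s·i mod n)`-th row of `A`
(i.e. `P i t = δ_{t, s·i mod n}`), one has `P · D(f) · P⁻¹ = D_σ(g)` where
`g = ∑_{i=0}^{n-1} a_{(s·i) mod n} x^{σ^i}`; in particular `rank D(f) = rank D_σ(g)`. -/
theorem stmt_9 (p e q n s : ℕ) (hp : p.Prime) (he : 0 < e) (hq : q = p ^ e)
    (hn : 0 < n) (hs : Nat.gcd s n = 1)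
    (F : Type*) [Field F] [Fintype F] (hF : Fintype.card F = q ^ n)
    (a : ℕ → F) :
    (Matrix.of fun i t : Fin n => if t.val = (s * i.val) % n then (1 : F) else 0)
          * dickFull q n a
          * (Matrix.of fun i t : Fin n => if t.val = (s * i.val) % n then (1 : F) else 0)⁻¹
        = dickFull (q ^ s) n (fun i => a ((s * i) % n)) ∧
      (dickFull q n a).rank = (dickFull (q ^ s) n (fun i => a ((s * i) % n))).rank := by
  set π := mulPerm s n hn hs with hπ
  have hval : ∀ i : Fin n, (π i).val = (s * i.val) % n := fun i => rfl
  have hP : (Matrix.of fun i t : Fin n => if t.val = (s * i.val) % n then (1 : F) else 0)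
      = π.permMatrix F := by
    ext i t
    simp [Equiv.Perm.permMatrix, PEquiv.toMatrix_apply, Fin.ext_iff, hval, eq_comm]
  have hinv : (π.permMatrix F)⁻¹ = (π⁻¹).permMatrix F := by
    apply Matrix.inv_eq_right_inv
    rw [← Matrix.permMatrix_mul, inv_mul_cancel, Matrix.permMatrix_one]
  have hsub : (dickFull q n a).submatrix π π = dickFull (q ^ s) n (fun i => a ((s * i) % n)) := by
    ext i j
    simp only [dickFull, Matrix.submatrix_apply, Matrix.of_apply, hval]
    rw [mul_index_mod s i.val j.val i.isLt, pow_q_pow_mod hF, pow_mul q]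
  refine ⟨?_, ?_⟩
  · rw [hP, hinv, ← hsub]
    simp only [Equiv.Perm.permMatrix, PEquiv.toMatrix_toPEquiv_mul, PEquiv.mul_toMatrix_toPEquiv]
    rfl
  · rw [← hsub, Matrix.rank_submatrix]
end

section
/- Let q be a prime power, let n ≥ 1, and let f(x) = Σ_{i=0}^{n−1} a_i x^{q^i} ∈ F_{q^n}[x]. Let H(y) be the n×n matrix with polynomial entries obtained from the Dickson matrix D(f) by replacing each diagonal entry a_0^{q^i} by y^{q^i}, and let H_0(y) ∈ F_{q^n}[y] be its determinant. Then every root of H_0(y) in the algebraic closure of F_q lies in F_{q^n}. -/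
/-!
Let `K` be the algebraic closure, `φ` the `q`-power automorphism of `K`, and `M = H(z)`.
Since the `a_i` are fixed by `φ^n`, the matrix `M` is invariant under applying `φ` and shifting both
indices cyclically by one, except that the corner entry `(n-1, n-1)` is sent to `z^{q^n}`
instead of `M 0 0 = z`. Put `c = z - z^{q^n}` and suppose `c ≠ 0`.

Let `Φ` be the `φ`-semilinear shift of vectors. If `M v = 0` then `M (Φ v)` is supported on the
coordinate `0`, with value `c * φ (v (n-1))`. Were `v (n-1) = 0` for all `v` in the kernel, the
kernel would be `Φ`-stable and hence zero. So if `M` is singular, the basis vector `e_0` lies in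
the image of `M`, and therefore every left kernel vector `u` has `u 0 = 0`. But then the left
kernel is stable under `Φ⁻¹`, hence zero, which is a contradiction. This is
`det_ne_zero_of_shift`; it gives `z^{q^n} = z`, i.e. `z ∈ F`.
-/

open Matrix in
/-- A square matrix that is invariant under applying a field automorphism and shifting both
indices cyclically, up to a nonzero defect `c` in exactly one entry, is nonsingular. -/
lemma det_ne_zero_of_shift {K : Type*} [Field K] (φ : K ≃+* K) (m : ℕ)
    (M : Matrix (Fin (m + 1)) (Fin (m + 1)) K) (c : K) (hc : c ≠ 0)
    (hM : ∀ i j, M (i + 1) (j + 1) =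
      φ (M i j) + if i = Fin.last m then (if j = Fin.last m then c else 0) else 0) :
    M.det ≠ 0 := by
  intro hdet
  -- The image of `Φ v` under `M`, where `Φ v i = φ (v (i - 1))`.
  have hΦ : ∀ v : Fin (m + 1) → K, M *ᵥ v = 0 → ∀ i,
      (M *ᵥ fun k => φ (v (k - 1))) (i + 1) =
        if i = Fin.last m then c * φ (v (Fin.last m)) else 0 := by
    intro v hv i
    have h0 : ∑ j, M i j * v j = 0 := congrFun hv i
    have h1 : ∑ j, φ (M i j) * φ (v j) = 0 := by
      simpa only [map_sum, map_mul, map_zero] using congrArg φ h0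
    have h2 : (M *ᵥ fun k => φ (v (k - 1))) (i + 1)
        = ∑ j, M (i + 1) (j + 1) * φ (v j) := by
      simp only [mulVec, dotProduct]
      rw [← Equiv.sum_comp (Equiv.addRight (1 : Fin (m + 1)))]
      simp
    rw [h2]
    simp only [hM, add_mul, Finset.sum_add_distrib, h1, zero_add]
    split_ifs <;> simp
  obtain ⟨v, hv, hvl⟩ : ∃ v : Fin (m + 1) → K, M *ᵥ v = 0 ∧ v (Fin.last m) ≠ 0 := by
    by_contra! hcon
    have key : ∀ i : Fin (m + 1), ∀ v : Fin (m + 1) → K, M *ᵥ v = 0 → v i = 0 := by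
      intro i
      induction i using Fin.reverseInduction with
      | last => exact hcon
      | cast i ih =>
        intro v hv
        have hker : (M *ᵥ fun k => φ (v (k - 1))) = 0 := by
          funext i
          have := hΦ v hv (i - 1)
          rw [sub_add_cancel, hcon v hv] at this
          simpa using this
        have := ih _ hker
        simpa [← Fin.coeSucc_eq_succ] using this
    obtain ⟨v, hv0, hv⟩ := Matrix.exists_mulVec_eq_zero_iff.mpr hdet
    exact hv0 (funext fun i => key i v hv)
  -- Pairing a left kernel vector with `M (Φ v) = c * φ (v last) • e_0` kills its coordinate `0`.
  have hu0 : ∀ u : Fin (m + 1) → K, u ᵥ* M = 0 → u 0 = 0 := by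
    intro u hu
    have h1 : u ⬝ᵥ (M *ᵥ fun k => φ (v (k - 1))) = 0 := by
      rw [dotProduct_mulVec, hu, zero_dotProduct]
    simp only [dotProduct] at h1
    rw [← Equiv.sum_comp (Equiv.addRight (1 : Fin (m + 1)))] at h1
    simp only [Equiv.coe_addRight, hΦ v hv] at h1
    simpa [hc, hvl] using h1
  have key : ∀ i : Fin (m + 1), ∀ u : Fin (m + 1) → K, u ᵥ* M = 0 → u i = 0 := by
    intro i
    induction i using Fin.induction with
    | zero => exact hu0
    | succ i ih =>
      intro u hu
      have hker : (fun i => φ.symm (u (i + 1))) ᵥ* M = 0 := by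
        funext j
        apply φ.injective
        have h0 : ∑ i, u i * M i (j + 1) = 0 := congrFun hu (j + 1)
        rw [← Equiv.sum_comp (Equiv.addRight (1 : Fin (m + 1)))] at h0
        simp only [Equiv.coe_addRight, hM, mul_add, Finset.sum_add_distrib] at h0
        simpa [vecMul, dotProduct, hu0 u hu] using h0
      have := ih _ hker
      simpa using this
  obtain ⟨u, hune, hu⟩ := Matrix.exists_vecMul_eq_zero_iff.mpr hdet
  exact hune (funext fun i => key i u hu)

lemma mem_range_of_pow_card_eq (F K : Type*) [Field F] [Fintype F] [Field K] [Algebra F K] (z : K)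
    (hz : z ^ Fintype.card F = z) : ∃ w : F, algebraMap F K w = z := by
  have hsplit : (Polynomial.X ^ Fintype.card F - Polynomial.X : Polynomial F).Splits := by
    simpa using (FiniteField.isSplittingField_sub F F).splits
  have hne : (Polynomial.X ^ Fintype.card F - Polynomial.X : Polynomial F) ≠ 0 :=
    FiniteField.X_pow_card_sub_X_ne_zero F Fintype.one_lt_card
  exact hsplit.mem_range_of_isRoot hne (by simp [hz])

/-- Corollary (part 1): let `f = ∑_{i=0}^{n-1} a_i x^{q^i} ∈ F_{q^n}[x]` and let `H(y)`
be the matrix obtained from the Dickson matrix `D(f)` by replacing each diagonal entry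
`a_0^{q^i}` by `y^{q^i}`, with `H_0(y) = det H(y) ∈ F_{q^n}[y]`.  Then every root of
`H_0` in the algebraic closure of `F_q` (= the algebraic closure of `F_{q^n}`) lies
in `F_{q^n}`. -/
theorem stmt_12 (p e q n : ℕ) (hp : p.Prime) (he : 0 < e) (hq : q = p ^ e)
    (hn : 0 < n) (F : Type*) [Field F] [Fintype F] (hF : Fintype.card F = q ^ n)
    (a : ℕ → F) (z : AlgebraicClosure F)
    (hz : Polynomial.aeval z
        (Matrix.det (Matrix.of fun i j : Fin n =>
          if i = j then Polynomial.X ^ q ^ i.val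
          else Polynomial.C (a ((j.val + n - i.val) % n) ^ q ^ i.val))) = 0) :
    ∃ w : F, algebraMap F (AlgebraicClosure F) w = z := by
  obtain ⟨m, rfl⟩ : ∃ m, n = m + 1 := ⟨n - 1, by omega⟩
  apply mem_range_of_pow_card_eq
  rw [hF]
  by_contra hne
  have : Fact p.Prime := ⟨hp⟩
  have : CharP F p := by
    obtain ⟨r, hr⟩ := CharP.exists F
    obtain ⟨k, hr', hk⟩ := FiniteField.card F r
    have h : p = r := by
      have h1 : p ∣ r ^ (k : ℕ) := by
        rw [← hk, hF, hq, ← pow_mul]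
        exact dvd_pow_self p (by positivity)
      exact (Nat.prime_dvd_prime_iff_eq hp hr').mp (hp.dvd_of_dvd_pow h1)
    rwa [h]
  have : CharP (AlgebraicClosure F) p := charP_of_injective_algebraMap
    (algebraMap F (AlgebraicClosure F)).injective p
  have hφ : ∀ x, iterateFrobeniusEquiv (AlgebraicClosure F) p e x = x ^ q := by
    intro x
    rw [iterateFrobeniusEquiv_apply, iterateFrobenius_def, hq]
  rw [AlgHom.map_det] at hz
  refine det_ne_zero_of_shift (iterateFrobeniusEquiv (AlgebraicClosure F) p e) m _
    (z - z ^ q ^ (m + 1)) (sub_ne_zero.mpr (Ne.symm hne)) ?_ hz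
  intro i j
  rw [hφ]
  simp only [AlgHom.mapMatrix_apply, Matrix.map_apply, Matrix.of_apply, add_left_inj]
  have hval : ∀ k : Fin (m + 1), (k = Fin.last m ∧ (k + 1).val = 0 ∧ k.val = m) ∨
      (k ≠ Fin.last m ∧ (k + 1).val = k.val + 1) := by
    intro k
    by_cases hk : k = Fin.last m
    · left; subst hk; simp
    · right; exact ⟨hk, Fin.val_add_one_of_lt (Fin.lt_last_iff_ne_last.mpr hk)⟩
  by_cases hij : i = j
  · subst hij
    rcases hval i with ⟨h1, h2, h3⟩ | ⟨h1, h2⟩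
    · simp [h1, ← pow_mul, ← pow_succ]
    · simp [h1, h2, ← pow_mul, ← pow_succ]
  · have hdef : (if i = Fin.last m then
        (if j = Fin.last m then z - z ^ q ^ (m + 1) else 0) else 0) = 0 := by
      split_ifs with h1 h2
      · exact absurd (h1.trans h2.symm) hij
      · rfl
      · rfl
    have hidx : ((j + 1).val + (m + 1) - (i + 1).val) % (m + 1)
        = (j.val + (m + 1) - i.val) % (m + 1) := by
      rcases hval i with ⟨h1, h2, h3⟩ | ⟨h1, h2⟩ <;> rcases hval j with ⟨h4, h5, h6⟩ | ⟨h4, h5⟩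
      · exact absurd (h1.trans h4.symm) hij
      · rw [h2, h5, h3, show j.val + (m + 1) - m = j.val + 1 by omega]; simp
      · rw [h2, h5, h6, show m + (m + 1) - i.val = (m - i.val) + (m + 1) by omega]
        simp
      · rw [h2, h5]; congr 1; omega
    rw [hdef, add_zero, if_neg hij, if_neg hij, hidx, Polynomial.aeval_C, Polynomial.aeval_C,
      ← map_pow, ← pow_mul, ← pow_succ]
    congr 1
    rcases hval i with ⟨h1, h2, h3⟩ | ⟨h1, h2⟩
    -- In the wrap-around row `i = n - 1` this is `x ^ q ^ n = x` for `x ∈ F`.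
    · rw [h2, h3, ← hF, FiniteField.pow_card]; simp
    · rw [h2]
end

section
/- Let q be a prime power, let n ≥ 1, and let f(x) = Σ_{i=0}^{n−1} a_i x^{q^i} ∈ F_{q^n}[x]. For 1 ≤ μ ≤ n−1, the number of points of L_f of weight μ with respect to U_f equals the number of elements y_0 ∈ F_{q^n} satisfying H_0(y_0) = H_1(y_0) = … = H_{μ−1}(y_0) = 0 and H_μ(y_0) ≠ 0. -/
/-!
Replacing `c` by `y = a₀ - c` turns the solutions of `f(x) = c x` into the kernel of the `q`-polynomial
`g(x) = y x + ∑_{i ≥ 1} a_i x^{q^i}`, whose Dickson matrix is `H(y)`. Everything then follows from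
Csajbók's criterion: if `k = dim_{F_q} ker g`, then `H_m(y) = 0` for `m < k` and `H_k(y) ≠ 0`.

A vector `u` in the left kernel of the matrix defining `H_m(y)` is the same as a `q`-polynomial
`U(x) = ∑_{i < n-m} u_i x^{q^i}` such that `U ∘ g`, reduced modulo `x^{q^n} - x`, has
vanishing coefficients at `x^{q^j}` for all `m ≤ j < n` (`linPoly_comp`).

* For `m < k` (`dicksonMinor_det_eq_zero`): requiring `U` to vanish on `im g` imposes `n - k < n - m`
  linear conditions on `u`, so some `u ≠ 0` has `U ∘ g = 0`.
* For `m = k` (`dicksonMinor_det_ne_zero`): the reduction of `U ∘ g` has degree less than `q^k` and vanishes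
  on the `q^k` elements of `ker g`, so it is zero. Thus `U`, of degree less than `q^{n-k}`, vanishes on the
  `q^{n-k}` elements of `im g`, and `u = 0`.
-/

/-- `H_m(y)` evaluated at `y ∈ F_{q^n}`: the determinant of the `(n-m) × (n-m)` matrix
obtained from the matrix `H(y)` (the Dickson matrix of `f = ∑_{i=0}^{n-1} a_i x^{q^i}`
with each diagonal entry `a_0^{q^i}` replaced by `y^{q^i}`) by removing its first `m`
columns and last `m` rows. -/
noncomputable def Hdet (q n m : ℕ) {F : Type*} [Field F] (a : ℕ → F) (y : F) : F :=
  (Matrix.of fun i j : Fin (n - m) =>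
      if i.val = j.val + m then y ^ q ^ i.val
      else a ((j.val + m + n - i.val) % n) ^ q ^ i.val).det

section Csajbok

variable {K F : Type*} [Field K] [Fintype K] [Field F] [Algebra K F]

variable (K) in
/-- The `F_q`-linear map `x ↦ ∑_{i < N} c_i x^{q^i}` on `F`, where `K = F_q`. -/
noncomputable def linPoly {N : ℕ} (c : Fin N → F) : F →ₗ[K] F :=
  ∑ i : Fin N, c i • ((FiniteField.frobeniusAlgHom K F) ^ (i : ℕ)).toLinearMap

lemma linPoly_apply {N : ℕ} (c : Fin N → F) (x : F) :
    linPoly K c x = ∑ i : Fin N, c i * x ^ Fintype.card K ^ (i : ℕ) := by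
  simp [linPoly, AlgHom.coe_pow, FiniteField.coe_frobeniusAlgHom, pow_iterate]

/-- The `(n-m) × (n-m)` matrix obtained from the Dickson matrix of `∑_{i < n} b_i x^{q^i}` by removing the
first `m` columns and the last `m` rows. -/
def dicksonMinor (q n m : ℕ) (b : ℕ → F) : Matrix (Fin (n - m)) (Fin (n - m)) F :=
  Matrix.of fun i j => b ((j.val + m + n - i.val) % n) ^ q ^ i.val

/-- The left kernel of `dicksonMinor` in terms of the coefficients of `U ∘ g` at `x^{q^j}`, `m ≤ j < n`. -/
lemma vecMul_dicksonMinor_eq_zero_iff (q n m : ℕ) (b : ℕ → F) (u : Fin (n - m) → F) :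
    Matrix.vecMul u (dicksonMinor q n m b) = 0 ↔
      ∀ j : Fin n, m ≤ j.val →
        ∑ i : Fin (n - m), u i * b ((j.val + n - i.val) % n) ^ q ^ i.val = 0 := by
  constructor
  · intro h j hj
    have := congrFun h ⟨j.val - m, by omega⟩
    simpa [Matrix.vecMul, dotProduct, dicksonMinor, Nat.sub_add_cancel hj] using this
  · intro h
    funext j
    simpa [Matrix.vecMul, dotProduct, dicksonMinor] using h ⟨j.val + m, by omega⟩ (by simp)

variable [Fintype F]

/-- A `q`-polynomial of degree less than `q^N` vanishing on a subspace of dimension at least `N` is zero. -/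
lemma linPoly_eq_zero {N : ℕ} (c : Fin N → F) (W : Submodule K F)
    (hW : N ≤ Module.finrank K W) (h : ∀ x ∈ W, linPoly K c x = 0) : c = 0 := by
  classical
  have hq : 1 < Fintype.card K := Fintype.one_lt_card
  set P : Polynomial F := ∑ i : Fin N, Polynomial.monomial (Fintype.card K ^ (i : ℕ)) (c i) with hP
  have hcard : (Finset.univ.filter (· ∈ W)).card = Fintype.card K ^ Module.finrank K W := by
    rw [← Fintype.card_subtype]
    exact Module.card_eq_pow_finrank (K := K) (V := W)
  have hP0 : P = 0 := by
    refine Polynomial.eq_zero_of_degree_lt_of_eval_finset_eq_zero (Finset.univ.filter (· ∈ W)) ?_ ?_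
    · rw [hcard, ← Polynomial.mem_degreeLT]
      refine Submodule.sum_mem _ fun i _ => ?_
      rw [Polynomial.mem_degreeLT]
      refine (Polynomial.degree_monomial_le _ _).trans_lt ?_
      exact_mod_cast Nat.pow_lt_pow_right hq (i.2.trans_le hW)
    · intro x hx
      have := h x (by simpa using hx)
      rw [linPoly_apply] at this
      simpa [hP, Polynomial.eval_finsetSum] using this
  funext i
  have hi : P.coeff (Fintype.card K ^ (i : ℕ)) = c i := by
    rw [hP, Polynomial.finsetSum_coeff, Finset.sum_eq_single i]
    · simp
    · intro j _ hj
      rw [Polynomial.coeff_monomial, if_neg]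
      intro hji
      exact hj (Fin.ext (Nat.pow_right_injective hq hji))
    · simp
  rw [← hi, hP0]
  simp

lemma pow_card_pow_mod {n : ℕ} (hn : Module.finrank K F = n) (x : F) (j : ℕ) :
    x ^ Fintype.card K ^ (j % n) = x ^ Fintype.card K ^ j := by
  subst hn
  conv_rhs => rw [← Nat.mod_add_div j (Module.finrank K F)]
  rw [pow_add, pow_mul, pow_mul, ← Module.card_eq_pow_finrank (K := K) (V := F),
    FiniteField.pow_card_pow]

/-- Composition of `q`-polynomials modulo `x^{q^n} - x`: the coefficient of `x^{q^j}` in `U ∘ g` is the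
`j`-th entry of the product of the row vector `u` with the first rows of the Dickson matrix of `g`. -/
lemma linPoly_comp {N n : ℕ} (hn : Module.finrank K F = n) (hN : N ≤ n) (u : Fin N → F) (b : ℕ → F) (x : F) :
    linPoly K u (linPoly K (fun i : Fin n => b i) x) =
      linPoly K (fun j : Fin n =>
        ∑ i : Fin N, u i * b ((j.val + n - i.val) % n) ^ Fintype.card K ^ i.val) x := by
  simp only [linPoly_apply, Finset.sum_mul]
  rw [Finset.sum_comm]
  refine Finset.sum_congr rfl fun i _ => ?_
  have hi : i.val < n := i.2.trans_le hN
  have hfrob : ∀ z : Fin n → F, (∑ l, z l) ^ Fintype.card K ^ i.val = ∑ l, z l ^ Fintype.card K ^ i.val := by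
    intro z
    have := map_sum ((FiniteField.frobeniusAlgHom K F) ^ (i : ℕ)) z Finset.univ
    simpa only [AlgHom.coe_pow, FiniteField.coe_frobeniusAlgHom, pow_iterate] using this
  rw [hfrob, Finset.mul_sum]
  have hn0 : 0 < n := by omega
  refine Finset.sum_bij' (fun l _ => ⟨(l.val + i.val) % n, Nat.mod_lt _ hn0⟩)
    (fun j _ => ⟨(j.val + n - i.val) % n, Nat.mod_lt _ hn0⟩) (by simp) (by simp) ?_ ?_ ?_
  · intro l _
    ext
    have := l.2
    rcases lt_or_ge (l.val + i.val) n with h | h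
    · simp only [Nat.mod_eq_of_lt h]
      rw [show l.val + i.val + n - i.val = l.val + n by omega]
      simp [Nat.mod_eq_of_lt l.2]
    · simp only [Nat.mod_eq_sub_mod h, Nat.mod_eq_of_lt (show l.val + i.val - n < n by omega)]
      rw [show l.val + i.val - n + n - i.val = l.val by omega, Nat.mod_eq_of_lt l.2]
  · intro j _
    ext
    simp only [Nat.mod_add_mod]
    rw [show j.val + n - i.val + i.val = j.val + n by omega]
    simp [Nat.mod_eq_of_lt j.2]
  · intro l _
    have hl : ((l.val + i.val) % n + n - i.val) % n = l.val := by
      have := l.2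
      rcases lt_or_ge (l.val + i.val) n with h | h
      · rw [Nat.mod_eq_of_lt h, show l.val + i.val + n - i.val = l.val + n by omega]
        simp [Nat.mod_eq_of_lt l.2]
      · rw [Nat.mod_eq_sub_mod h, Nat.mod_eq_of_lt (show l.val + i.val - n < n by omega),
          show l.val + i.val - n + n - i.val = l.val by omega, Nat.mod_eq_of_lt l.2]
    dsimp only
    rw [hl, pow_card_pow_mod hn, pow_add, pow_mul, mul_pow, mul_assoc]

lemma dicksonMinor_det_eq_zero {n m : ℕ} (hn : Module.finrank K F = n) (b : ℕ → F)
    (hm : m < Module.finrank K (linPoly K (fun i : Fin n => b i)).ker) :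
    (dicksonMinor (Fintype.card K) n m b).det = 0 := by
  set g := linPoly K (fun i : Fin n => b i) with hg
  have hrn := g.finrank_range_add_finrank_ker
  rw [hn] at hrn
  let B := Module.finBasis K g.range
  -- `Φ u` lists the values of `U` at a basis of the image of `g`.
  let Φ : (Fin (n - m) → F) →ₗ[F] (Fin (Module.finrank K g.range) → F) :=
    LinearMap.pi fun t => ∑ i, ((B t : F) ^ Fintype.card K ^ i.val) • LinearMap.proj i
  have hker : Φ.ker ≠ ⊥ := LinearMap.ker_ne_bot_of_finrank_lt (by simp; omega)
  obtain ⟨u, hu, hu0⟩ := Submodule.exists_mem_ne_zero_of_ne_bot hker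
  rw [← Matrix.exists_vecMul_eq_zero_iff]
  refine ⟨u, hu0, (vecMul_dicksonMinor_eq_zero_iff _ _ _ _ _).2 fun j _ => ?_⟩
  have hUr : (linPoly K u).comp g.range.subtype = 0 := by
    refine B.ext fun t => ?_
    have := congrFun (LinearMap.mem_ker.1 hu) t
    simpa [Φ, linPoly_apply, mul_comm] using this
  have hcomp := linPoly_eq_zero (K := K) (fun j : Fin n =>
    ∑ i : Fin (n - m), u i * b ((j.val + n - i.val) % n) ^ Fintype.card K ^ i.val) ⊤
    (by simp [hn]) (fun x _ => by
      rw [← linPoly_comp hn (Nat.sub_le _ _)]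
      exact LinearMap.congr_fun hUr ⟨g x, LinearMap.mem_range_self g x⟩)
  exact congrFun hcomp j

lemma dicksonMinor_det_ne_zero {n m : ℕ} (hn : Module.finrank K F = n) (b : ℕ → F)
    (hm : m = Module.finrank K (linPoly K (fun i : Fin n => b i)).ker) :
    (dicksonMinor (Fintype.card K) n m b).det ≠ 0 := by
  set g := linPoly K (fun i : Fin n => b i) with hg
  have hrn := g.finrank_range_add_finrank_ker
  rw [hn] at hrn
  intro hdet
  obtain ⟨u, hu0, hu⟩ := Matrix.exists_vecMul_eq_zero_iff.2 hdet
  rw [vecMul_dicksonMinor_eq_zero_iff] at hu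
  set d : ℕ → F := fun j =>
    ∑ i : Fin (n - m), u i * b ((j + n - i.val) % n) ^ Fintype.card K ^ i.val with hd
  have hmn : m ≤ n := by omega
  have hUg : ∀ x, linPoly K u (g x) = linPoly K (fun j : Fin m => d j) x := by
    intro x
    rw [hg, linPoly_comp hn (Nat.sub_le _ _), linPoly_apply, linPoly_apply,
      ← Finset.sum_range (fun j => d j * x ^ Fintype.card K ^ j),
      ← Finset.sum_range (fun j => d j * x ^ Fintype.card K ^ j)]
    symm
    refine Finset.sum_subset (by simpa using hmn) fun j hj hjm => ?_
    rw [hd]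
    simp only [Finset.mem_range, not_lt] at hj hjm
    dsimp only
    rw [hu ⟨j, hj⟩ hjm, zero_mul]
  have hd0 : (fun j : Fin m => d j) = 0 := by
    refine linPoly_eq_zero (K := K) _ g.ker hm.le fun x hx => ?_
    rw [← hUg, LinearMap.mem_ker.1 hx, map_zero]
  refine hu0 (linPoly_eq_zero (K := K) u g.range (by omega) ?_)
  rintro _ ⟨x, rfl⟩
  rw [hUg, hd0, linPoly_apply]
  simp

/-- Csajbók's criterion for the dimension of the kernel of a `q`-polynomial. -/
lemma card_ker_eq_iff {n μ : ℕ} (hn : Module.finrank K F = n) (b : ℕ → F) :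
    Nat.card (linPoly K (fun i : Fin n => b i)).ker = Fintype.card K ^ μ ↔
      (∀ m, m < μ → (dicksonMinor (Fintype.card K) n m b).det = 0) ∧
        (dicksonMinor (Fintype.card K) n μ b).det ≠ 0 := by
  rw [Module.natCard_eq_pow_finrank (K := K), Nat.card_eq_fintype_card,
    (Nat.pow_right_injective (Fintype.one_lt_card (α := K))).eq_iff]
  constructor
  · rintro h
    exact ⟨fun m hm => dicksonMinor_det_eq_zero hn b (by omega),
      dicksonMinor_det_ne_zero hn b h.symm⟩
  · rintro ⟨h1, h2⟩
    rcases lt_trichotomy (Module.finrank K (linPoly K (fun i : Fin n => b i)).ker) μ with h | h | h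
    · exact absurd (h1 _ h) (dicksonMinor_det_ne_zero hn b rfl)
    · exact h
    · exact absurd (dicksonMinor_det_eq_zero hn b h) h2

end Csajbok

lemma Hdet_eq_det_dicksonMinor {F : Type*} [Field F] {q n m : ℕ} (hn : 0 < n)
    (a : ℕ → F) (y : F) :
    Hdet q n m a y = (dicksonMinor q n m (Function.update a 0 y)).det := by
  unfold Hdet dicksonMinor
  congr 2
  funext i j
  have hi := i.2
  have hj := j.2
  split_ifs with h
  · rw [h, show j.val + m + n - (j.val + m) = n by omega]
    simp
  · rw [Function.update_of_ne]
    intro h0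
    obtain ⟨t, ht⟩ := Nat.dvd_of_mod_eq_zero h0
    -- `0 < n t < 2 n` forces `t = 1`, that is, `i = j + m`.
    have h1 : t < 2 := by
      by_contra! h2
      have := Nat.mul_le_mul_left n h2
      omega
    interval_cases t <;> omega

/-- `F_{q^n}` contains a copy of `F_q`. -/
theorem exists_algebra_card {p e q n : ℕ} (hp : p.Prime) (he : 0 < e) (hq : q = p ^ e)
    (F : Type*) [Field F] [Fintype F] (hF : Fintype.card F = q ^ n) :
    ∃ (K : Type) (_ : Field K) (_ : Fintype K) (_ : Algebra K F), Fintype.card K = q := by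
  have := Fact.mk hp
  have hF' : Fintype.card F = p ^ (e * n) := by rw [hF, hq, pow_mul]
  have : CharP F p := charP_of_card_eq_prime_pow hF'
  let _ : Algebra (ZMod p) F := ZMod.algebra F p
  have hfr : Module.finrank (ZMod p) F = e * n := by
    have := Module.card_eq_pow_finrank (K := ZMod p) (V := F)
    rw [hF', ZMod.card] at this
    exact (Nat.pow_right_injective hp.two_le this).symm
  obtain ⟨φ⟩ : Nonempty (GaloisField p e →ₐ[ZMod p] F) := by
    apply FiniteField.nonempty_algHom_of_finrank_dvd
    rw [GaloisField.finrank p he.ne', hfr]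
    exact dvd_mul_right _ _
  let _ : Fintype (GaloisField p e) := Fintype.ofFinite _
  refine ⟨GaloisField p e, inferInstance, inferInstance, φ.toRingHom.toAlgebra, ?_⟩
  rw [Fintype.card_eq_nat_card, GaloisField.card p e he.ne', hq]

/-- Corollary (part 2): for `f = ∑_{i=0}^{n-1} a_i x^{q^i} ∈ F_{q^n}[x]` and
`1 ≤ μ ≤ n-1`, the number of points `⟨(1,c)⟩` of the linear set `L_f` having weight `μ`
with respect to `U_f` (a point of weight `μ` being one with
`#{x : f(x) = c·x} = q^μ`) equals the number of `y₀ ∈ F_{q^n}` with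
`H_0(y₀) = ⋯ = H_{μ-1}(y₀) = 0` and `H_μ(y₀) ≠ 0`. -/
theorem stmt_13 (p e q n : ℕ) (hp : p.Prime) (he : 0 < e) (hq : q = p ^ e)
    (hn : 0 < n) (F : Type*) [Field F] [Fintype F] (hF : Fintype.card F = q ^ n)
    (a : ℕ → F) (μ : ℕ) (hμ1 : 1 ≤ μ) (hμ2 : μ ≤ n - 1) :
    Nat.card {c : F //
        (∃ x : F, x ≠ 0 ∧ ∑ i ∈ Finset.range n, a i * x ^ q ^ i = c * x) ∧
        Nat.card {x : F // ∑ i ∈ Finset.range n, a i * x ^ q ^ i = c * x} = q ^ μ}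
      = Nat.card {y : F // (∀ m, m < μ → Hdet q n m a y = 0) ∧ Hdet q n μ a y ≠ 0} := by
  obtain ⟨K, _, _, _, hK⟩ := exists_algebra_card hp he hq F hF
  have hq1 : 1 < q := hK ▸ Fintype.one_lt_card
  have hfin : Module.finrank K F = n := by
    have := Module.card_eq_pow_finrank (K := K) (V := F)
    rw [hF, hK] at this
    exact (Nat.pow_right_injective hq1 this).symm
  refine Nat.card_congr (Equiv.subtypeEquiv (Equiv.subLeft (a 0)) fun c => ?_)
  simp only [Equiv.subLeft_apply, Hdet_eq_det_dicksonMinor hn]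
  set b := Function.update a 0 (a 0 - c) with hb
  have hsol : ∀ x : F, ∑ i ∈ Finset.range n, a i * x ^ q ^ i = c * x ↔
      x ∈ (linPoly K (fun i : Fin n => b i)).ker := by
    intro x
    rw [LinearMap.mem_ker, linPoly_apply, hK,
      ← Finset.sum_range (fun i => b i * x ^ q ^ i)]
    obtain ⟨k, rfl⟩ : ∃ k, n = k + 1 := ⟨n - 1, by omega⟩
    rw [Finset.sum_range_succ', Finset.sum_range_succ', ← sub_eq_zero]
    simp only [hb, Function.update_self, Function.update_of_ne (Nat.add_one_ne_zero _), pow_zero, pow_one]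
    rw [sub_mul, ← add_sub_assoc]
  have hcard : Nat.card {x : F // ∑ i ∈ Finset.range n, a i * x ^ q ^ i = c * x} =
      Nat.card (linPoly K (fun i : Fin n => b i)).ker :=
    Nat.card_congr (Equiv.subtypeEquivRight hsol)
  have hcrit := card_ker_eq_iff (K := K) (μ := μ) hfin b
  rw [hK] at hcrit
  rw [← hcrit, hcard, and_iff_right_iff_imp]
  -- A kernel with `q^μ > 1` elements contains a nonzero one.
  intro h
  have h1 : 1 < Nat.card (linPoly K (fun i : Fin n => b i)).ker := by
    rw [h]
    exact Nat.one_lt_pow (by omega) hq1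
  have := Finite.one_lt_card_iff_nontrivial.1 h1
  obtain ⟨x, hx⟩ := exists_ne (0 : (linPoly K (fun i : Fin n => b i)).ker)
  exact ⟨x, by simpa using hx, (hsol x).2 x.2⟩
end
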